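/- arXiv:1703.00677 — 4 statements merged into one kernel-verified Lean document; each statement's English description precedes it below -/
import Mathlib

section
/- Let (S,d) be a complete separable metric space and let {P_λ : λ ∈ Λ} be a family of regular Markov operators on S with dual operators U_λ. Then the following are equivalent: (i) for every f ∈ BL(S), the family {U_λ f : λ ∈ Λ} of functions S → ℝ is equicontinuous; (ii) the family {P_λ : λ ∈ Λ}, viewed as maps from M⁺(S) with the metric induced by ‖·‖*_BL to itself, is equicontinuous; (iii) the family {P_λ : λ ∈ Λ}, restricted to the Borel probability measures P(S) equipped with the topology of weak (narrow) convergence, and with values in P(S) with the metric induced by ‖·‖*_BL, is equicontinuous. -/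
open MeasureTheory Filter Topology

/-- A function is bounded Lipschitz. -/
def IsBL {S : Type*} [PseudoMetricSpace S] (f : S → ℝ) : Prop :=
  (∃ C : ℝ, ∀ x, |f x| ≤ C) ∧ ∃ K : NNReal, LipschitzWith K f

/-- Pairing of a finite signed Borel measure with a function, via the Jordan decomposition. -/
noncomputable def pairing {S : Type*} [MeasurableSpace S] (μ : SignedMeasure S) (f : S → ℝ) : ℝ :=
  (∫ x, f x ∂μ.toJordanDecomposition.posPart) - ∫ x, f x ∂μ.toJordanDecomposition.negPart

/-- Dual bounded Lipschitz norm on signed measures. -/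
noncomputable def blDualNorm {S : Type*} [PseudoMetricSpace S] [MeasurableSpace S]
    (μ : SignedMeasure S) : ℝ :=
  sSup {r : ℝ | ∃ (f : S → ℝ) (C : ℝ) (K : NNReal), (∀ x, |f x| ≤ C) ∧
    LipschitzWith K f ∧ C + (K : ℝ) ≤ 1 ∧ r = |pairing μ f|}

/-- The metric induced by `‖·‖*_BL` on finite positive Borel measures. -/
noncomputable def blDist {S : Type*} [PseudoMetricSpace S] [MeasurableSpace S]
    (μ ν : FiniteMeasure S) : ℝ :=
  blDualNorm ((μ : Measure S).toSignedMeasure - (ν : Measure S).toSignedMeasure)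


set_option linter.unusedSectionVars false
set_option linter.unusedVariables false

namespace EqE

variable {S : Type*} [MetricSpace S] [MeasurableSpace S] [BorelSpace S]

lemma intg {f : S → ℝ} (hf : Measurable f) {C : ℝ} (hC : ∀ x, |f x| ≤ C) (μ : Measure S)
    [IsFiniteMeasure μ] : Integrable f μ :=
  Integrable.of_bound hf.aestronglyMeasurable C (ae_of_all _ (by simpa using hC))

lemma pairing_eq {f : S → ℝ} (hf : Measurable f) {C : ℝ} (hC : ∀ x, |f x| ≤ C) (μ ν : Measure S)
    [IsFiniteMeasure μ] [IsFiniteMeasure ν] :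
    pairing (μ.toSignedMeasure - ν.toSignedMeasure) f = ∫ x, f x ∂μ - ∫ x, f x ∂ν := by
  unfold pairing
  set s := μ.toSignedMeasure - ν.toSignedMeasure with hs
  have h := s.toSignedMeasure_toJordanDecomposition
  set j := s.toJordanDecomposition
  have h2 : j.posPart + ν = j.negPart + μ := by
    rw [← Measure.toSignedMeasure_eq_toSignedMeasure_iff, Measure.toSignedMeasure_add,
      Measure.toSignedMeasure_add]
    have h3 : j.posPart.toSignedMeasure - j.negPart.toSignedMeasure =
      μ.toSignedMeasure - ν.toSignedMeasure := by rw [← hs, ← h]; rfl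
    rw [sub_eq_sub_iff_add_eq_add] at h3
    rw [h3, add_comm]
  have h4 : ∫ x, f x ∂(j.posPart + ν) = ∫ x, f x ∂(j.negPart + μ) := by rw [h2]
  rw [integral_add_measure (intg hf hC _) (intg hf hC _),
    integral_add_measure (intg hf hC _) (intg hf hC _)] at h4
  linarith

/-- estimate by a constant plus mass of a set -/
lemma nu_bound {f : S → ℝ} (hf : Measurable f) (μ ν : Measure S) [IsFiniteMeasure μ]
    [IsFiniteMeasure ν] {E : Set S} (hE : MeasurableSet E) {a b : ℝ} (ha : 0 ≤ a) (hb : 0 ≤ b)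
    (h1 : ∀ x, |f x| ≤ a + b) (h2 : ∀ x, x ∉ E → |f x| ≤ a) :
    |∫ x, f x ∂μ - ∫ x, f x ∂ν| ≤ a * (μ + ν).real Set.univ + b * (μ + ν).real E := by
  have key : ∀ τ : Measure S, IsFiniteMeasure τ →
      |∫ x, f x ∂τ| ≤ a * τ.real Set.univ + b * τ.real E := by
    intro τ _
    calc |∫ x, f x ∂τ| ≤ ∫ x, |f x| ∂τ := abs_integral_le_integral_abs
      _ ≤ ∫ x, (a + E.indicator (fun _ => b) x) ∂τ := by
        apply integral_mono (intg hf h1 τ).abs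
        · exact (integrable_const a).add ((integrable_const b).indicator hE)
        · intro x
          by_cases hx : x ∈ E
          · simpa [hx] using h1 x
          · simpa [hx] using h2 x hx
      _ = _ := by
        rw [integral_add (integrable_const a) ((integrable_const b).indicator hE),
          integral_indicator hE]
        simp [mul_comm]
  have k1 := key μ inferInstance
  have k2 := key ν inferInstance
  rw [measureReal_add_apply, measureReal_add_apply]
  have := abs_sub (∫ x, f x ∂μ) (∫ x, f x ∂ν)
  linarith

lemma le_one_of {f : S → ℝ} {C : ℝ} {K : NNReal} (hC : ∀ x, |f x| ≤ C) (h : C + (K : ℝ) ≤ 1) (x : S) :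
    |f x| ≤ 1 := (hC x).trans (by have := K.2; simp at this; linarith)

lemma blDist_nonneg (μ ν : FiniteMeasure S) : 0 ≤ blDist μ ν := by
  apply Real.sSup_nonneg
  rintro r ⟨f, C, K, -, -, -, rfl⟩
  exact abs_nonneg _

lemma bdd (μ ν : FiniteMeasure S) : BddAbove {r : ℝ | ∃ (f : S → ℝ) (C : ℝ) (K : NNReal), (∀ x, |f x| ≤ C) ∧
    LipschitzWith K f ∧ C + (K : ℝ) ≤ 1 ∧
    r = |pairing ((μ : Measure S).toSignedMeasure - (ν : Measure S).toSignedMeasure) f|} := by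
  refine ⟨1 * ((μ : Measure S) + (ν : Measure S)).real Set.univ +
    0 * ((μ : Measure S) + (ν : Measure S)).real ∅, ?_⟩
  rintro r ⟨f, C, K, hC, hK, hCK, rfl⟩
  have h1 := le_one_of hC hCK
  rw [pairing_eq hK.continuous.measurable h1]
  exact nu_bound hK.continuous.measurable _ _ MeasurableSet.empty zero_le_one le_rfl
    (by simpa using h1) (fun x _ => h1 x)

lemma le_blDist (μ ν : FiniteMeasure S) {f : S → ℝ} {C : ℝ} {K : NNReal} (hC : ∀ x, |f x| ≤ C)
    (hK : LipschitzWith K f) (h : C + (K : ℝ) ≤ 1) :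
    |∫ x, f x ∂(μ : Measure S) - ∫ x, f x ∂(ν : Measure S)| ≤ blDist μ ν := by
  apply le_csSup (bdd μ ν)
  exact ⟨f, C, K, hC, hK, h, by rw [pairing_eq hK.continuous.measurable hC]⟩

lemma le_mul_blDist {f : S → ℝ} (hf : IsBL f) : ∃ s : ℝ, 0 < s ∧ ∀ μ ν : FiniteMeasure S,
    |∫ x, f x ∂(μ : Measure S) - ∫ x, f x ∂(ν : Measure S)| ≤ s * blDist μ ν := by
  obtain ⟨⟨C, hC⟩, K, hK⟩ := hf
  have hs : 0 < |C| + (K : ℝ) + 1 := by positivity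
  set s := |C| + (K : ℝ) + 1 with hsd
  refine ⟨s, hs, fun μ ν => ?_⟩
  have h := le_blDist μ ν (f := fun x => s⁻¹ * f x) (C := s⁻¹ * |C|) (K := ‖s⁻¹‖₊ * K) ?_ ?_ ?_
  · rw [integral_const_mul, integral_const_mul, ← mul_sub, abs_mul, abs_of_pos (inv_pos.2 hs),
      inv_mul_le_iff₀ hs] at h
    exact h
  · intro x
    rw [abs_mul, abs_of_pos (inv_pos.2 hs)]
    exact mul_le_mul_of_nonneg_left ((hC x).trans (le_abs_self C)) (inv_pos.2 hs).le
  · exact (lipschitzWith_smul (s⁻¹ : ℝ)).comp hK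
  · push_cast
    rw [Real.norm_of_nonneg (inv_pos.2 hs).le, ← mul_add, inv_mul_le_iff₀ hs]
    linarith

lemma blDist_le {μ ν : FiniteMeasure S} {b : ℝ} (hb : 0 ≤ b) (h : ∀ f : S → ℝ, (∀ x, |f x| ≤ 1) →
    LipschitzWith 1 f → |∫ x, f x ∂(μ : Measure S) - ∫ x, f x ∂(ν : Measure S)| ≤ b) :
    blDist μ ν ≤ b := by
  apply Real.sSup_le _ hb
  rintro r ⟨f, C, K, hC, hK, hCK, rfl⟩
  rw [pairing_eq hK.continuous.measurable hC]
  rcases isEmpty_or_nonempty S with hS | ⟨⟨x⟩⟩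
  · have : ∀ τ : Measure S, ∫ x, f x ∂τ = 0 := by
      intro τ; rw [Measure.eq_zero_of_isEmpty τ]; simp
    simp [this, hb]
  · apply h f (le_one_of hC hCK) (hK.weaken ?_)
    have := (abs_nonneg _).trans (hC x)
    rw [← NNReal.coe_le_coe]; push_cast; linarith

/-- balls around finite sets carry almost all mass -/
lemma tight [TopologicalSpace.SeparableSpace S] [Nonempty S] (τ : Measure S) [IsFiniteMeasure τ]
    {r η : ℝ} (hr : 0 < r) (hη : 0 < η) : ∃ K : Set S, K.Finite ∧ K.Nonempty ∧
    τ.real {x | r < Metric.infDist x K} ≤ η := by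
  let D := TopologicalSpace.denseSeq S
  let K : ℕ → Set S := fun n => D '' Set.Iic n
  have hK : ∀ n, (K n).Nonempty := fun n => ⟨D n, n, by simp, rfl⟩
  let E : ℕ → Set S := fun n => {x | r < Metric.infDist x (K n)}
  have hE : Antitone E := by
    intro m n hmn x hx
    have : Metric.infDist x (K n) ≤ Metric.infDist x (K m) :=
      Metric.infDist_le_infDist_of_subset (Set.image_mono (Set.Iic_subset_Iic.2 hmn)) (hK m)
    exact lt_of_lt_of_le hx this
  have hI : ⋂ n, E n = ∅ := by
    ext x
    simp only [Set.mem_iInter, Set.mem_empty_iff_false, iff_false, not_forall]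
    obtain ⟨n, hn⟩ := (TopologicalSpace.denseRange_denseSeq S).exists_dist_lt x hr
    refine ⟨n, ?_⟩
    simp only [E, Set.mem_ofPred_eq, not_lt]
    exact (Metric.infDist_le_dist_of_mem (show D n ∈ K n from ⟨n, by simp, rfl⟩)).trans hn.le
  have hm : ∀ n, MeasurableSet (E n) := fun n =>
    measurableSet_lt measurable_const (Metric.continuous_infDist_pt _).measurable
  have ht := tendsto_measure_iInter_atTop (μ := τ) (fun n => (hm n).nullMeasurableSet) hE
    ⟨0, measure_ne_top _ _⟩
  rw [hI, measure_empty] at ht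
  have ht2 := (ENNReal.tendsto_toReal ENNReal.zero_ne_top).comp ht
  obtain ⟨n, hn⟩ := (ht2.eventually_le_const (show (0 : ENNReal).toReal < η by simpa using hη)).exists
  exact ⟨K n, (Set.finite_Iic n).image _, hK n, hn⟩

lemma exists_cut (A : Set S) (s : ℝ) {r : ℝ} (hr : 0 < r) : ∃ ψ : S → ℝ, (∀ x, 0 ≤ ψ x) ∧
    (∀ x, ψ x ≤ 1) ∧ (∀ x y, |ψ x - ψ y| ≤ dist x y / r) ∧
    (∀ x, Metric.infDist x A ≤ s → ψ x = 1) ∧ (∀ x, s + r ≤ Metric.infDist x A → ψ x = 0) := by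
  refine ⟨fun x => max 0 (min 1 ((s + r - Metric.infDist x A) / r)), ?_, ?_, ?_, ?_, ?_⟩
  · intro x; exact le_max_left _ _
  · intro x; exact max_le zero_le_one (min_le_left _ _)
  · intro x y
    have h1 : |(s + r - Metric.infDist x A) / r - (s + r - Metric.infDist y A) / r| ≤ dist x y / r := by
      rw [← sub_div, abs_div, abs_of_pos hr]
      gcongr
      have := (Metric.lipschitz_infDist_pt A).dist_le_mul y x
      rw [Real.dist_eq, dist_comm y x] at this
      simp only [NNReal.coe_one, one_mul] at this
      have e : s + r - Metric.infDist x A - (s + r - Metric.infDist y A) =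
        Metric.infDist y A - Metric.infDist x A := by ring
      rw [e]; exact this
    refine le_trans ?_ h1
    refine (abs_max_sub_max_le_max _ _ _ _).trans ?_
    simp only [sub_self, abs_zero]
    refine max_le (abs_nonneg _) ((abs_min_sub_min_le_max _ _ _ _).trans ?_)
    simp
  · intro x hx
    have : 1 ≤ (s + r - Metric.infDist x A) / r := by rw [le_div_iff₀ hr]; linarith
    simp [this]
  · intro x hx
    have : (s + r - Metric.infDist x A) / r ≤ 0 :=
      div_nonpos_of_nonpos_of_nonneg (by linarith) hr.le
    exact max_eq_left ((min_le_right _ _).trans this)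

lemma lip_of {f : S → ℝ} {L : ℝ} (hL : 0 ≤ L) (h : ∀ x y, |f x - f y| ≤ L * dist x y) :
    LipschitzWith ⟨L, hL⟩ f := LipschitzWith.of_dist_le_mul (fun x y => by
      rw [Real.dist_eq]; exact h x y)

lemma isBL_of {f : S → ℝ} {L C : ℝ} (hL : 0 ≤ L) (hC : ∀ x, |f x| ≤ C)
    (h : ∀ x y, |f x - f y| ≤ L * dist x y) : IsBL f := ⟨⟨C, hC⟩, _, lip_of hL h⟩

def inF (f : S → ℝ) : Prop := (∀ x, |f x| ≤ 1) ∧ ∀ x y, |f x - f y| ≤ dist x y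

lemma finite_net {A : Set S} (hA : A.Finite) {r : ℝ} (hr : 0 < r) : ∃ T : Set (S → ℝ), T.Finite ∧
    (∀ h ∈ T, inF h) ∧ ∀ f, inF f → ∃ h ∈ T, ∀ a ∈ A, |f a - h a| ≤ r := by
  have := hA.fintype
  let R : (S → ℝ) → (A → ℝ) := fun f a => f a
  have hb : TotallyBounded (R '' {f | inF f}) := by
    refine (isCompact_closedBall (0 : A → ℝ) 1).totallyBounded.subset ?_
    rintro _ ⟨f, hf, rfl⟩
    rw [mem_closedBall_zero_iff, pi_norm_le_iff_of_nonneg zero_le_one]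
    intro a
    exact hf.1 a
  obtain ⟨t, ht, htf, htc⟩ := Metric.finite_approx_of_totallyBounded hb r hr
  obtain ⟨T, hT, hTf, rfl⟩ : ∃ T ⊆ {f | inF f}, T.Finite ∧ R '' T = t := by
    have := (Set.exists_subset_image_finite_and (f := R) (s := {f : S → ℝ | inF f})
      (p := fun x => x = t)).1 ⟨t, ht, htf, rfl⟩
    exact this
  refine ⟨T, hTf, hT, fun f hf => ?_⟩
  have h1 := htc ⟨f, hf, rfl⟩
  simp only [Set.mem_iUnion] at h1
  obtain ⟨_, ⟨h, hh, rfl⟩, h2⟩ := h1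
  refine ⟨h, hh, fun a ha => ?_⟩
  have h3 := (dist_le_pi_dist (R f) (R h) ⟨a, ha⟩).trans (Metric.mem_ball.1 h2).le
  exact h3

noncomputable def nu (μ ν : Measure S) (f : S → ℝ) : ℝ := ∫ x, f x ∂μ - ∫ x, f x ∂ν

lemma nu_add (μ ν : Measure S) [IsFiniteMeasure μ] [IsFiniteMeasure ν] {f g : S → ℝ}
    (hf : Measurable f) (hg : Measurable g) {C D : ℝ} (hC : ∀ x, |f x| ≤ C) (hD : ∀ x, |g x| ≤ D) :
    nu μ ν (fun x => f x + g x) = nu μ ν f + nu μ ν g := by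
  unfold nu
  rw [integral_add (intg hf hC _) (intg hg hD _), integral_add (intg hf hC _) (intg hg hD _)]
  ring

lemma mul_lip {f g : S → ℝ} {a b : ℝ} (ha : 0 ≤ a) (hb : 0 ≤ b) (hf : ∀ x, |f x| ≤ 1)
    (hg : ∀ x, |g x| ≤ 1) (hf' : ∀ x y, |f x - f y| ≤ a * dist x y)
    (hg' : ∀ x y, |g x - g y| ≤ b * dist x y) (x y : S) :
    |f x * g x - f y * g y| ≤ (a + b) * dist x y := by
  have : f x * g x - f y * g y = (f x - f y) * g x + f y * (g x - g y) := by ring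
  rw [this]
  refine (abs_add_le _ _).trans ?_
  rw [abs_mul, abs_mul, add_mul]
  have h1 : |f x - f y| * |g x| ≤ |f x - f y| * 1 := by gcongr; exact hg x
  have h2 : |f y| * |g x - g y| ≤ 1 * |g x - g y| := by gcongr; exact hf y
  linarith [hf' x y, hg' x y]

lemma mul_le_one' {f g : S → ℝ} (hf : ∀ x, |f x| ≤ 1)
    (hg : ∀ x, |g x| ≤ 1) (x : S) : |f x * g x| ≤ 1 := by
  rw [abs_mul]; exact mul_le_one₀ (hf x) (abs_nonneg _) (hg x)

lemma small {α β : ℕ → FiniteMeasure S} {M : ℝ}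
    (hM : ∀ n, ((α n : Measure S) + (β n : Measure S)).real Set.univ ≤ M)
    (h : ∀ f : S → ℝ, IsBL f → Tendsto (fun n => nu (α n : Measure S) (β n : Measure S) f) atTop (𝓝 0))
    {A : Set S} (hA : A.Finite) (hAn : A.Nonempty) {r L : ℝ} (hr : 0 < r) (hL : 0 ≤ L) {ψ : S → ℝ}
    (h0 : ∀ x, |ψ x| ≤ 1) (hlip : ∀ x y, |ψ x - ψ y| ≤ L * dist x y)
    (hsupp : ∀ x, 4 * r ≤ Metric.infDist x A → ψ x = 0) {η : ℝ} (hη : 0 < η) :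
    ∀ᶠ n in atTop, ∀ f, inF f →
      |nu (α n : Measure S) (β n : Measure S) (fun x => f x * ψ x)| ≤ 9 * r * M + η := by
  obtain ⟨T, hT, hTF, hTn⟩ := finite_net hA hr
  have hev : ∀ᶠ n in atTop, ∀ g ∈ T,
      |nu (α n : Measure S) (β n : Measure S) (fun x => g x * ψ x)| < η := by
    rw [hT.eventually_all]
    intro g hg
    have hbl : IsBL (fun x => g x * ψ x) := isBL_of (C := 1) (add_nonneg zero_le_one hL)
      (mul_le_one' (hTF g hg).1 h0)
      (mul_lip zero_le_one hL (hTF g hg).1 h0 (by simpa using (hTF g hg).2) hlip)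
    have := (h _ hbl).abs
    rw [abs_zero] at this
    exact this.eventually_lt_const hη
  filter_upwards [hev] with n hn f hf
  obtain ⟨g, hg, hfg⟩ := hTn f hf
  have hgF := hTF g hg
  have hfm : Measurable f := (lip_of zero_le_one (by simpa using hf.2)).continuous.measurable
  have hgm : Measurable g := (lip_of zero_le_one (by simpa using hgF.2)).continuous.measurable
  have hψm : Measurable ψ := (lip_of hL hlip).continuous.measurable
  have hb : ∀ x, |(f x - g x) * ψ x| ≤ 9 * r := by
    intro x
    by_cases hx : 4 * r ≤ Metric.infDist x A
    · rw [hsupp x hx]; simp; positivity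
    · rw [not_le, Metric.infDist_lt_iff hAn] at hx
      obtain ⟨a, ha, hxa⟩ := hx
      have e1 := hf.2 x a
      have e2 := hgF.2 x a
      have e3 := hfg a ha
      have e4 : |f x - g x| ≤ 9 * r := by
        rw [abs_le] at *; constructor <;> linarith
      rw [abs_mul]
      calc |f x - g x| * |ψ x| ≤ |f x - g x| * 1 := by gcongr; exact h0 x
        _ ≤ _ := by linarith
  have e := nu_bound ((hfm.sub hgm).mul hψm) (α n : Measure S) (β n : Measure S) MeasurableSet.empty
    (a := 9 * r) (b := 0) (by positivity) le_rfl (by simpa using hb) (fun x _ => hb x)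
  have e2 : nu (α n : Measure S) (β n : Measure S) (fun x => f x * ψ x) =
      nu (α n : Measure S) (β n : Measure S) (fun x => (f x - g x) * ψ x) +
      nu (α n : Measure S) (β n : Measure S) (fun x => g x * ψ x) := by
    rw [← nu_add (f := fun x => (f x - g x) * ψ x) (g := fun x => g x * ψ x) _ _ ((hfm.sub hgm).mul hψm) (hgm.mul hψm) hb (mul_le_one' hgF.1 h0)]
    congr 1; ext x; ring
  rw [e2]
  refine (abs_add_le _ _).trans ?_
  have e3 := hn g hg
  have e4 : 9 * r * ((α n : Measure S) + (β n : Measure S)).real Set.univ ≤ 9 * r * M := by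
    gcongr; exact hM n
  have e5 : |nu (α n : Measure S) (β n : Measure S) (fun x => (f x - g x) * ψ x)| ≤ 9 * r * M := by
    unfold nu
    refine le_trans e ?_
    linarith
  linarith

/-- state invariant of the gliding hump -/
def Inv (r : ℝ) (s : Set S × (S → ℝ)) : Prop :=
  s.1.Finite ∧ s.1.Nonempty ∧ (∀ x, |s.2 x| ≤ 1) ∧ (∀ x y, |s.2 x - s.2 y| ≤ (3 / r) * dist x y) ∧
    ∀ x, 2 * r < Metric.infDist x s.1 → s.2 x = 0

lemma glue {G g : S → ℝ} {A : Set S} {r : ℝ} (hr : 0 < r) (hG : ∀ x, |G x| ≤ 1) (hg : ∀ x, |g x| ≤ 1)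
    (hG' : ∀ x y, |G x - G y| ≤ (3 / r) * dist x y) (hg' : ∀ x y, |g x - g y| ≤ (3 / r) * dist x y)
    (hGs : ∀ x, 2 * r < Metric.infDist x A → G x = 0)
    (hgs : ∀ x, Metric.infDist x A ≤ 3 * r → g x = 0) :
    (∀ x, |G x + g x| ≤ 1) ∧ ∀ x y, |(G x + g x) - (G y + g y)| ≤ (3 / r) * dist x y := by
  have alt : ∀ x, (G x = 0) ∨ (g x = 0 ∧ Metric.infDist x A ≤ 2 * r) := by
    intro x
    by_cases hx : 2 * r < Metric.infDist x A
    · exact Or.inl (hGs x hx)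
    · exact Or.inr ⟨hgs x (by linarith), not_lt.1 hx⟩
  have key : ∀ x y, G x = 0 → g y = 0 → Metric.infDist y A ≤ 2 * r →
      |g x - G y| ≤ (3 / r) * dist x y := by
    intro x y h1 h2 h3
    by_cases hx : Metric.infDist x A ≤ 3 * r
    · have e := hG' x y
      rw [h1] at e
      rw [hgs x hx]; exact e
    · have e : Metric.infDist x A ≤ Metric.infDist y A + dist x y := Metric.infDist_le_infDist_add_dist
      have e1 : r ≤ dist x y := by linarith
      have e2 : 3 ≤ (3 / r) * dist x y := by
        rw [div_mul_eq_mul_div, le_div_iff₀ hr]; linarith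
      have := abs_sub (g x) (G y)
      linarith [hG y, hg x]
  constructor
  · intro x
    rcases alt x with h | ⟨h, -⟩ <;> simp [h, hG, hg]
  · intro x y
    rcases alt x with h | ⟨h, h'⟩ <;> rcases alt y with k | ⟨k, k'⟩
    · simpa [h, k] using hg' x y
    · simpa [h, k] using key x y h k k'
    · have := key y x k h h'
      rw [abs_sub_comm, dist_comm] at this
      simpa [h, k] using this
    · simpa [h, k] using hG' x y

lemma step [TopologicalSpace.SeparableSpace S] [Nonempty S] {α β : ℕ → FiniteMeasure S} {M : ℝ}
    (hM : ∀ n, ((α n : Measure S) + (β n : Measure S)).real Set.univ ≤ M)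
    (h : ∀ f : S → ℝ, IsBL f → Tendsto (fun n => nu (α n : Measure S) (β n : Measure S) f) atTop (𝓝 0))
    {r η ε : ℝ} (hr : 0 < r) (hr1 : r ≤ 1) (hη : 0 < η)
    (hfr : ∃ᶠ n in atTop, ∃ f, inF f ∧ ε ≤ |nu (α n : Measure S) (β n : Measure S) f|)
    (s : Set S × (S → ℝ)) (hs : Inv r s) (N : ℕ) :
    ∃ (n : ℕ) (s' : Set S × (S → ℝ)), N ≤ n ∧ Inv r s' ∧ s.1 ⊆ s'.1 ∧
      (∀ x, Metric.infDist x s.1 ≤ 2 * r → s'.2 x = s.2 x) ∧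
      ((α n : Measure S) + (β n : Measure S)).real {x | r < Metric.infDist x s'.1} ≤ η ∧
      ε - 9 * r * M - 3 * η ≤ |nu (α n : Measure S) (β n : Measure S) s'.2| := by
  obtain ⟨A, G⟩ := s
  obtain ⟨hA, hAn, hG, hG', hGs⟩ := hs
  simp only at hA hAn hG hG' hGs
  obtain ⟨ψ, ψ0, ψ1, ψl, ψ3, ψ4⟩ := exists_cut A (3 * r) hr
  have hL : (0:ℝ) ≤ 1 / r := by positivity
  have hψ : ∀ x, |ψ x| ≤ 1 := fun x => by rw [abs_of_nonneg (ψ0 x)]; exact ψ1 x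
  have hψl : ∀ x y, |ψ x - ψ y| ≤ (1 / r) * dist x y := fun x y => by
    rw [one_div_mul_eq_div]; exact ψl x y
  have h1 := small hM h hA hAn hr hL hψ hψl (fun x hx => ψ4 x (by linarith)) hη
  have hGbl : IsBL G := isBL_of (by positivity) hG hG'
  have h2 : ∀ᶠ n in atTop, |nu (α n : Measure S) (β n : Measure S) G| < η := by
    have := (h G hGbl).abs
    rw [abs_zero] at this
    exact this.eventually_lt_const hη
  obtain ⟨n, ⟨f, hf, hfε⟩, h1, h2, hn⟩ :=
    (hfr.and_eventually (h1.and (h2.and (eventually_ge_atTop N)))).exists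
  have h1 := h1 f hf
  obtain ⟨K, hK, hKn, hKm⟩ := tight ((α n : Measure S) + (β n : Measure S)) hr hη
  obtain ⟨φ, φ0, φ1, φl, φ3, φ4⟩ := exists_cut K r hr
  have hφ : ∀ x, |φ x| ≤ 1 := fun x => by rw [abs_of_nonneg (φ0 x)]; exact φ1 x
  have hφl : ∀ x y, |φ x - φ y| ≤ (1 / r) * dist x y := fun x y => by
    rw [one_div_mul_eq_div]; exact φl x y
  have hψ' : ∀ x, |1 - ψ x| ≤ 1 := fun x => by rw [abs_le]; constructor <;> linarith [ψ0 x, ψ1 x]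
  have hψl' : ∀ x y, |(1 - ψ x) - (1 - ψ y)| ≤ (1 / r) * dist x y := fun x y => by
    have := hψl y x
    rw [dist_comm] at this
    convert this using 2
    ring
  have hφ' : ∀ x, |1 - φ x| ≤ 1 := fun x => by rw [abs_le]; constructor <;> linarith [φ0 x, φ1 x]
  have b1 := mul_le_one' hf.1 hψ'
  have l1 := mul_lip zero_le_one hL hf.1 hψ' (by simpa using hf.2) hψl'
  have b2 := mul_le_one' b1 hφ
  have l2 := mul_lip (add_nonneg zero_le_one hL) hL b1 hφ l1 hφl
  set g : S → ℝ := fun x => f x * (1 - ψ x) * φ x with hgd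
  have l2' : ∀ x y, |g x - g y| ≤ (3 / r) * dist x y := fun x y => by
    refine (l2 x y).trans ?_
    gcongr
    rw [add_assoc, ← add_div, ← sub_nonneg]
    have : 3 / r - (1 + (1 + 1) / r) = (1 - r) / r := by field_simp; ring
    rw [this]
    exact div_nonneg (by linarith) hr.le
  have hgs : ∀ x, Metric.infDist x A ≤ 3 * r → g x = 0 := fun x hx => by
    simp [hgd, ψ3 x hx]
  obtain ⟨c1, c2⟩ := glue hr hG b2 hG' l2' hGs hgs
  have iA : ∀ x, Metric.infDist x (A ∪ K) ≤ Metric.infDist x A := fun x =>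
    Metric.infDist_le_infDist_of_subset Set.subset_union_left hAn
  have iK : ∀ x, Metric.infDist x (A ∪ K) ≤ Metric.infDist x K := fun x =>
    Metric.infDist_le_infDist_of_subset Set.subset_union_right hKn
  have hfm : Measurable f := (lip_of zero_le_one (by simpa using hf.2)).continuous.measurable
  have hψm : Measurable ψ := (lip_of hL hψl).continuous.measurable
  have hφm : Measurable φ := (lip_of hL hφl).continuous.measurable
  have hGm : Measurable G := (lip_of (by positivity) hG').continuous.measurable
  have hgm : Measurable g := (hfm.mul (measurable_const.sub hψm)).mul hφm
  refine ⟨n, (A ∪ K, fun x => G x + g x), hn, ⟨hA.union hK, hAn.inl, c1, c2, ?_⟩,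
    Set.subset_union_left, ?_, ?_, ?_⟩
  · intro x hx
    simp only at hx ⊢
    rw [hGs x (hx.trans_le (iA x)), hgd]
    simp [φ4 x (by linarith [iK x])]
  · intro x hx
    simp only at hx ⊢
    rw [hgs x (by linarith), add_zero]
  · refine le_trans (measureReal_mono ?_) hKm
    intro x hx
    exact lt_of_lt_of_le hx (iK x)
  · simp only
    rw [nu_add _ _ hGm hgm hG b2]
    let w : S → ℝ := fun x => f x * (1 - ψ x) * (1 - φ x)
    have hwm : Measurable w := (hfm.mul (measurable_const.sub hψm)).mul (measurable_const.sub hφm)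
    have hw1 : ∀ x, |w x| ≤ 1 := mul_le_one' b1 hφ'
    have hfψ1 : ∀ x, |f x * ψ x| ≤ 1 := mul_le_one' hf.1 hψ
    have d1 : nu (α n : Measure S) (β n : Measure S) f =
        nu (α n : Measure S) (β n : Measure S) g + nu (α n : Measure S) (β n : Measure S) w +
        nu (α n : Measure S) (β n : Measure S) (fun x => f x * ψ x) := by
      rw [← nu_add _ _ hgm hwm b2 hw1, ← nu_add (f := fun x => g x + w x) (g := fun x => f x * ψ x) _ _ (hgm.add hwm)
        (hfm.mul hψm) (C := 2) (D := 1) ?_ hfψ1]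
      · congr 1; ext x; simp only [hgd, w]; ring
      · intro x
        have := abs_add_le (g x) (w x)
        linarith [b2 x, hw1 x]
    have hEm : MeasurableSet {x | r < Metric.infDist x K} :=
      measurableSet_lt measurable_const (Metric.continuous_infDist_pt _).measurable
    have d2 := nu_bound hwm (α n : Measure S) (β n : Measure S) hEm le_rfl zero_le_one
      (by simpa using hw1) (fun x hx => by
        have : φ x = 1 := φ3 x (not_lt.1 hx)
        simp [w, this])
    have d3 : |nu (α n : Measure S) (β n : Measure S) w| ≤ η := by
      unfold nu; linarith
    rw [d1] at hfε
    generalize nu (α n : Measure S) (β n : Measure S) g = q1 at *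
    generalize nu (α n : Measure S) (β n : Measure S) w = q2 at *
    generalize nu (α n : Measure S) (β n : Measure S) (fun x => f x * ψ x) = q3 at *
    generalize nu (α n : Measure S) (β n : Measure S) G = q4 at *
    have t1 := abs_add_le (q1 + q2) q3
    have t2 := abs_add_le q1 q2
    have t3 : |q1| ≤ |q4 + q1| + |q4| := by
      have := abs_sub (q4 + q1) q4
      simpa using this
    linarith

lemma schur [TopologicalSpace.SeparableSpace S] {α β : ℕ → FiniteMeasure S} {M : ℝ}
    (hM : ∀ n, ((α n : Measure S) + (β n : Measure S)).real Set.univ ≤ M)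
    (h : ∀ f : S → ℝ, IsBL f → Tendsto (fun n => ∫ x, f x ∂(α n : Measure S) -
      ∫ x, f x ∂(β n : Measure S)) atTop (𝓝 0)) :
    Tendsto (fun n => blDist (α n) (β n)) atTop (𝓝 0) := by
  rcases isEmpty_or_nonempty S with hS | hS
  · have : ∀ n, blDist (α n) (β n) = 0 := fun n => by
      refine le_antisymm (blDist_le le_rfl (fun f _ _ => ?_)) (blDist_nonneg _ _)
      rw [Measure.eq_zero_of_isEmpty (α n : Measure S), Measure.eq_zero_of_isEmpty (β n : Measure S)]
      simp
    simp [this]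
  have hM0 : 0 ≤ M := measureReal_nonneg.trans (hM 0)
  by_contra hcon
  obtain ⟨ε, hε, hfr⟩ : ∃ ε > 0, ∃ᶠ n in atTop, ∃ f, inF f ∧
      ε ≤ |nu (α n : Measure S) (β n : Measure S) f| := by
    by_contra hc
    push Not at hc
    apply hcon
    rw [Metric.tendsto_nhds]
    intro ε hε
    filter_upwards [hc (ε / 2) (by positivity)] with n hn
    rw [Real.dist_eq, sub_zero, abs_of_nonneg (blDist_nonneg _ _)]
    refine lt_of_le_of_lt (blDist_le (b := ε / 2) (by positivity) ?_) (by linarith)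
    intro f hf1 hf2
    exact (hn f ⟨hf1, fun x y => by simpa [Real.dist_eq] using hf2.dist_le_mul x y⟩).le
  set r : ℝ := min 1 (ε / (36 * (M + 1))) with hrd
  have hr : 0 < r := by positivity
  have hr1 : r ≤ 1 := min_le_left _ _
  have hrM : 9 * r * M ≤ ε / 4 := by
    have : r ≤ ε / (36 * (M + 1)) := min_le_right _ _
    rw [le_div_iff₀ (by positivity)] at this
    nlinarith
  set η : ℝ := ε / 16 with hηd
  have hη : 0 < η := by positivity
  have st := step hM h hr hr1 hη hfr
  obtain ⟨x0⟩ := hS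
  let St := {s : Set S × (S → ℝ) // Inv r s}
  let s0 : St := ⟨({x0}, fun _ => 0), Set.finite_singleton _, Set.singleton_nonempty _, by simp,
    by intro x y; simp; positivity, by simp⟩
  choose nn ss p1 p2 p3 p4 p5 p6 using st
  let σ : ℕ → St := fun k => Nat.rec s0 (fun k s => ⟨ss s.1 s.2 k, p2 s.1 s.2 k⟩) k
  have hσ : ∀ k, (σ (k+1)).1 = ss (σ k).1 (σ k).2 k := fun k => rfl
  let m : ℕ → ℕ := fun k => nn (σ k).1 (σ k).2 k
  have q1 : ∀ k, k ≤ m k := fun k => p1 _ _ k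
  have q3 : ∀ k, (σ k).1.1 ⊆ (σ (k+1)).1.1 := fun k => p3 _ _ k
  have q4 : ∀ k x, Metric.infDist x (σ k).1.1 ≤ 2 * r → (σ (k+1)).1.2 x = (σ k).1.2 x :=
    fun k => p4 _ _ k
  have q5 : ∀ k, ((α (m k) : Measure S) + (β (m k) : Measure S)).real
    {x | r < Metric.infDist x (σ (k+1)).1.1} ≤ η := fun k => p5 _ _ k
  have q6 : ∀ k, ε - 9 * r * M - 3 * η ≤ |nu (α (m k) : Measure S) (β (m k) : Measure S) (σ (k+1)).1.2| :=
    fun k => p6 _ _ k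
  have mono : Monotone (fun k => (σ k).1.1) := monotone_nat_of_le_succ q3
  have stab : ∀ k x, Metric.infDist x (σ k).1.1 ≤ 2 * r → ∀ j, k ≤ j → (σ j).1.2 x = (σ k).1.2 x := by
    intro k x hx j hj
    induction j, hj using Nat.le_induction with
    | base => rfl
    | succ j hj ih =>
      rw [q4 j x, ih]
      exact (Metric.infDist_le_infDist_of_subset (mono hj) (σ k).2.2.1).trans hx
  have lim : ∀ x, ∃ y, ∀ᶠ k in atTop, (σ k).1.2 x = y := by
    intro x
    by_cases hx : ∃ k, Metric.infDist x (σ k).1.1 ≤ 2 * r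
    · obtain ⟨k, hk⟩ := hx
      exact ⟨_, eventually_atTop.2 ⟨k, stab k x hk⟩⟩
    · push Not at hx
      exact ⟨0, Eventually.of_forall (fun k => (σ k).2.2.2.2.2 x (hx k))⟩
  choose g hg using lim
  have g1 : ∀ x, |g x| ≤ 1 := fun x => by
    obtain ⟨k, hk⟩ := (hg x).exists
    rw [← hk]; exact (σ k).2.2.2.1 x
  have g2 : ∀ x y, |g x - g y| ≤ (3 / r) * dist x y := fun x y => by
    obtain ⟨k, hk, hk'⟩ := ((hg x).and (hg y)).exists
    rw [← hk, ← hk']; exact (σ k).2.2.2.2.1 x y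
  have g3 : ∀ k x, Metric.infDist x (σ k).1.1 ≤ 2 * r → g x = (σ k).1.2 x := by
    intro k x hx
    obtain ⟨j, hj, hj'⟩ := ((hg x).and (eventually_ge_atTop k)).exists
    rw [← hj]; exact stab k x hx j hj'
  have hgbl : IsBL g := isBL_of (by positivity) g1 g2
  have hgm : Measurable g := (lip_of (by positivity) g2).continuous.measurable
  have low : ∀ k, ε / 4 ≤ |nu (α (m k) : Measure S) (β (m k) : Measure S) g| := by
    intro k
    set G := (σ (k+1)).1.2 with hG
    have hGm : Measurable G := (lip_of (by positivity) (σ (k+1)).2.2.2.2.1).continuous.measurable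
    have hG1 : ∀ x, |G x| ≤ 1 := (σ (k+1)).2.2.2.1
    let w : S → ℝ := fun x => G x - g x
    have hw : Measurable w := hGm.sub hgm
    have hw2 : ∀ x, |w x| ≤ 0 + 2 := fun x => by
      have := abs_sub (G x) (g x)
      simp only [w]
      linarith [g1 x, hG1 x]
    have e1 : nu (α (m k) : Measure S) (β (m k) : Measure S) G =
        nu (α (m k) : Measure S) (β (m k) : Measure S) g +
        nu (α (m k) : Measure S) (β (m k) : Measure S) w := by
      rw [← nu_add _ _ hgm hw g1 hw2]
      congr 1; ext x; simp [w]
    have hEm : MeasurableSet {x | r < Metric.infDist x (σ (k+1)).1.1} :=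
      measurableSet_lt measurable_const (Metric.continuous_infDist_pt _).measurable
    have e2 := nu_bound hw (α (m k) : Measure S) (β (m k) : Measure S) hEm le_rfl zero_le_two
      hw2 (fun x hx => by
        have : g x = G x := g3 (k+1) x ((not_lt.1 hx).trans (by linarith))
        simp [w, this])
    have e3 : |nu (α (m k) : Measure S) (β (m k) : Measure S) w| ≤ 2 * η := by
      unfold nu; linarith [q5 k]
    have e4 := q6 k
    rw [← hG, e1] at e4
    have := abs_add_le (nu (α (m k) : Measure S) (β (m k) : Measure S) g)
      (nu (α (m k) : Measure S) (β (m k) : Measure S) w)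
    linarith
  have hmt : Tendsto m atTop atTop := tendsto_atTop_mono q1 tendsto_id
  have := ((h g hgbl).comp hmt).abs
  rw [abs_zero] at this
  have := ge_of_tendsto' this low
  linarith

lemma unif [CompleteSpace S] [TopologicalSpace.SeparableSpace S] {μs : ℕ → FiniteMeasure S}
    {μ : FiniteMeasure S} (hμ : Tendsto μs atTop (𝓝 μ)) {g : ℕ → S → ℝ} (hg : Equicontinuous g)
    {C : ℝ} (hC : ∀ n x, |g n x| ≤ C) :
    Tendsto (fun n => ∫ x, g n x ∂(μs n : Measure S) - ∫ x, g n x ∂(μ : Measure S)) atTop (𝓝 0) := by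
  have : SecondCountableTopology S := UniformSpace.secondCountable_of_separable S
  rcases isEmpty_or_nonempty S with hS | ⟨⟨x0⟩⟩
  · have : ∀ τ : Measure S, τ = 0 := Measure.eq_zero_of_isEmpty
    simp [this]
  have hC0 : 0 ≤ C := (abs_nonneg _).trans (hC 0 x0)
  have hgc : ∀ n, Continuous (g n) := fun n => hg.continuous n
  have hint : ∀ f : S → ℝ, Continuous f → ∀ D : ℝ, (∀ x, |f x| ≤ D) →
      Tendsto (fun n => ∫ x, f x ∂(μs n : Measure S)) atTop (𝓝 (∫ x, f x ∂(μ : Measure S))) := by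
    intro f hf D hD
    exact FiniteMeasure.tendsto_iff_forall_integral_tendsto.1 hμ
      (BoundedContinuousFunction.ofNormedAddCommGroup f hf D hD)
  suffices H : ∀ ε > 0, ∀ᶠ n in atTop, |∫ x, g n x ∂(μs n : Measure S) - ∫ x, g n x ∂(μ : Measure S)| ≤
      ε * (2 * (μ : Measure S).real Set.univ + 2 + 3 * C) by
    have hpos : 0 < 2 * (μ : Measure S).real Set.univ + 2 + 3 * C := by positivity
    rw [Metric.tendsto_nhds]
    intro ε hε
    filter_upwards [H (ε / 2 / (2 * (μ : Measure S).real Set.univ + 2 + 3 * C)) (by positivity)] with n hn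
    rw [Real.dist_eq, sub_zero]
    rw [div_mul_cancel₀ _ hpos.ne'] at hn
    linarith
  intro ε hε
  obtain ⟨K, hK, hKm⟩ := isTightMeasureSet_iff_exists_isCompact_measure_compl_le.1
    (isTightMeasureSet_singleton (μ := (μ : Measure S))) (ENNReal.ofReal (ε / 2)) (by simpa using hε)
  have hKm := hKm _ rfl
  have hKr : (μ : Measure S).real Kᶜ ≤ ε / 2 := ENNReal.toReal_le_of_le_ofReal (by positivity) hKm
  have hO : ∀ x : S, ∃ O : Set S, IsOpen O ∧ x ∈ O ∧ ∀ y ∈ O, ∀ n, |g n x - g n y| < ε := by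
    intro x
    have := Metric.equicontinuousAt_iff_right.1 (hg x) ε hε
    obtain ⟨O, h1, h2, h3⟩ := eventually_nhds_iff.1 this
    exact ⟨O, h2, h3, fun y hy n => h1 y hy n⟩
  choose O hO1 hO2 hO3 using hO
  obtain ⟨t, ht⟩ := hK.elim_finite_subcover O hO1 (fun x _ => Set.mem_iUnion.2 ⟨x, hO2 x⟩)
  obtain ⟨p, hp⟩ := PartitionOfUnity.exists_isSubordinate hK.isClosed (fun i : t => O i)
    (fun i => hO1 i) (by
      intro x hx
      have := ht hx
      simp only [Set.mem_iUnion] at this ⊢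
      obtain ⟨i, hi, hx⟩ := this
      exact ⟨⟨i, hi⟩, hx⟩)
  have ps : ∀ x, ∑ i, p i x ≤ 1 := fun x => by
    rw [← finsum_eq_sum_of_fintype]; exact p.sum_le_one x
  have psK : ∀ x ∈ K, ∑ i, p i x = 1 := fun x hx => by
    rw [← finsum_eq_sum_of_fintype]; exact p.sum_eq_one hx
  have p1 : ∀ i x, |p i x| ≤ 1 := fun i x => by
    rw [abs_of_nonneg (p.nonneg i x)]; exact p.le_one i x
  let q : S → ℝ := fun x => 1 - ∑ i, p i x
  have q0 : ∀ x, 0 ≤ q x := fun x => sub_nonneg.2 (ps x)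
  have q1 : ∀ x, q x ≤ 1 := fun x => by
    have : 0 ≤ ∑ i, p i x := Finset.sum_nonneg (fun i _ => p.nonneg i x)
    simp only [q]; linarith
  have qa : ∀ x, |q x| ≤ 1 := fun x => by rw [abs_of_nonneg (q0 x)]; exact q1 x
  have qc : Continuous q := by fun_prop
  have qK : ∀ x ∈ K, q x = 0 := fun x hx => sub_eq_zero.2 (psK x hx).symm
  have hqμ : ∫ x, q x ∂(μ : Measure S) ≤ ε / 2 := by
    refine le_trans ?_ hKr
    rw [← integral_indicator_one hK.isClosed.measurableSet.compl]
    refine integral_mono (intg qc.measurable qa _)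
      ((integrable_const (1:ℝ)).indicator hK.isClosed.measurableSet.compl) ?_
    intro x
    by_cases hx : x ∈ K
    · simp [hx, qK x hx]
    · simpa [hx] using q1 x
  have ev1 : ∀ᶠ n in atTop, ∫ x, q x ∂(μs n : Measure S) < ε :=
    (hint q qc 1 qa).eventually_lt_const (by linarith)
  have ev2 : ∀ᶠ n in atTop, (μs n : Measure S).real Set.univ < (μ : Measure S).real Set.univ + 1 := by
    have := hint (fun _ => 1) continuous_const 1 (by simp)
    simp only [integral_const, smul_eq_mul, mul_one] at this
    exact this.eventually_lt_const (by linarith)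
  have ev3 : ∀ᶠ n in atTop, ∑ i, |∫ x, p i x ∂(μs n : Measure S) - ∫ x, p i x ∂(μ : Measure S)| < ε := by
    have : Tendsto (fun n => ∑ i, |∫ x, p i x ∂(μs n : Measure S) - ∫ x, p i x ∂(μ : Measure S)|) atTop
        (𝓝 (∑ i : t, |∫ x, p i x ∂(μ : Measure S) - ∫ x, p i x ∂(μ : Measure S)|)) := by
      refine tendsto_finsetSum _ (fun i _ => ?_)
      exact ((hint (p i) (p i).continuous 1 (p1 i)).sub_const _).abs
    simp only [sub_self, abs_zero, Finset.sum_const_zero] at this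
    exact this.eventually_lt_const hε
  filter_upwards [ev1, ev2, ev3] with n h1 h2 h3
  let w : S → ℝ := fun x => ∑ i : t, g n i * p i x
  have wc : Continuous w := by fun_prop
  have hgw : ∀ x, |g n x - w x| ≤ ε + C * q x := by
    intro x
    have e : g n x - w x = ∑ i : t, (g n x - g n i) * p i x + g n x * q x := by
      simp only [w, q, sub_mul, Finset.sum_sub_distrib, ← Finset.mul_sum]; ring
    rw [e]
    refine (abs_add_le _ _).trans (add_le_add ?_ ?_)
    · calc |∑ i : t, (g n x - g n i) * p i x| ≤ ∑ i : t, |(g n x - g n i) * p i x| :=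
          Finset.abs_sum_le_sum_abs _ _
        _ ≤ ∑ i : t, ε * p i x := by
          refine Finset.sum_le_sum (fun i _ => ?_)
          rw [abs_mul, abs_of_nonneg (p.nonneg i x)]
          by_cases hx : p i x = 0
          · simp [hx]
          · refine mul_le_mul_of_nonneg_right ?_ (p.nonneg i x)
            rw [abs_sub_comm]
            exact (hO3 i x (hp i (subset_tsupport _ hx)) n).le
        _ = ε * ∑ i : t, p i x := by rw [Finset.mul_sum]
        _ ≤ ε * 1 := mul_le_mul_of_nonneg_left (ps x) hε.le
        _ = ε := mul_one ε
    · rw [abs_mul, abs_of_nonneg (q0 x)]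
      exact mul_le_mul_of_nonneg_right (hC n x) (q0 x)
  have hgwb : ∀ x, |g n x - w x| ≤ ε + C := fun x => (hgw x).trans (by nlinarith [q1 x])
  have wb : ∀ x, |w x| ≤ ε + 2 * C := fun x => by
    have := hgwb x
    have := hC n x
    rw [abs_le] at *; constructor <;> linarith
  have key : ∀ τ : Measure S, IsFiniteMeasure τ →
      |∫ x, g n x ∂τ - ∫ x, w x ∂τ| ≤ ε * τ.real Set.univ + C * ∫ x, q x ∂τ := by
    intro τ _
    rw [← integral_sub (intg (hgc n).measurable (hC n) _) (intg wc.measurable wb _)]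
    refine abs_integral_le_integral_abs.trans ?_
    have hq := (intg qc.measurable qa τ).const_mul C
    calc ∫ x, |g n x - w x| ∂τ ≤ ∫ x, (ε + C * q x) ∂τ :=
          integral_mono (intg ((hgc n).sub wc).measurable hgwb τ).abs ((integrable_const ε).add hq) hgw
      _ = _ := by
        rw [integral_add (integrable_const ε) hq, integral_const_mul]
        simp [mul_comm]
  have kw : ∀ τ : Measure S, IsFiniteMeasure τ → ∫ x, w x ∂τ = ∑ i : t, g n i * ∫ x, p i x ∂τ := by
    intro τ _
    simp only [w]
    rw [integral_finsetSum]
    · simp_rw [integral_const_mul]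
    · intro i _
      exact (intg (p i).continuous.measurable (p1 i) τ).const_mul _
  have k3 : |∫ x, w x ∂(μs n : Measure S) - ∫ x, w x ∂(μ : Measure S)| ≤ C * ε := by
    rw [kw _ inferInstance, kw _ inferInstance, ← Finset.sum_sub_distrib]
    refine (Finset.abs_sum_le_sum_abs _ _).trans ?_
    calc _ ≤ ∑ i : t, C * |∫ x, p i x ∂(μs n : Measure S) - ∫ x, p i x ∂(μ : Measure S)| := by
          refine Finset.sum_le_sum (fun i _ => ?_)
          rw [← mul_sub, abs_mul]
          exact mul_le_mul_of_nonneg_right (hC n i) (abs_nonneg _)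
      _ ≤ C * ε := by
          rw [← Finset.mul_sum]
          exact mul_le_mul_of_nonneg_left h3.le hC0
  have k1 := key (μs n) inferInstance
  have k2 := key μ inferInstance
  have k4 : ε * (μs n : Measure S).real Set.univ ≤ ε * ((μ : Measure S).real Set.univ + 1) :=
    mul_le_mul_of_nonneg_left h2.le hε.le
  have k5 : C * ∫ x, q x ∂(μs n : Measure S) ≤ C * ε := mul_le_mul_of_nonneg_left h1.le hC0
  have k6 : C * ∫ x, q x ∂(μ : Measure S) ≤ C * ε := mul_le_mul_of_nonneg_left (by linarith) hC0
  rw [abs_le] at *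
  constructor <;> nlinarith

lemma weak_of_blDist {μs : ℕ → FiniteMeasure S} {μ : FiniteMeasure S}
    (h : Tendsto (fun n => blDist (μs n) μ) atTop (𝓝 0)) : Tendsto μs atTop (𝓝 μ) := by
  have hbl : ∀ f : S → ℝ, IsBL f →
      Tendsto (fun n => ∫ x, f x ∂(μs n : Measure S)) atTop (𝓝 (∫ x, f x ∂(μ : Measure S))) := by
    intro f hf
    obtain ⟨s, hs, hle⟩ := le_mul_blDist hf
    rw [tendsto_iff_dist_tendsto_zero]
    refine squeeze_zero (fun _ => dist_nonneg) (fun n => hle (μs n) μ) ?_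
    simpa using h.const_mul s
  have hmass : Tendsto (fun n => (μs n).mass) atTop (𝓝 μ.mass) := by
    have := hbl (fun _ => 1) ⟨⟨1, by simp⟩, 0, LipschitzWith.const 1⟩
    simp only [integral_const, smul_eq_mul, mul_one] at this
    rw [← NNReal.tendsto_coe]
    exact this
  by_cases h0 : μ = 0
  · subst h0
    apply FiniteMeasure.tendsto_zero_of_tendsto_zero_mass
    simpa using hmass
  rcases isEmpty_or_nonempty S with hS | hS
  · exact absurd (by ext1; simp [Measure.eq_zero_of_isEmpty]) h0
  refine FiniteMeasure.tendsto_of_tendsto_normalize_testAgainstNN_of_tendsto_mass ?_ hmass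
  rw [tendsto_iff_forall_lipschitz_integral_tendsto]
  intro f ⟨C, hC⟩ ⟨L, hL⟩
  have hf : IsBL f := by
    obtain ⟨x0⟩ := hS
    refine ⟨⟨C + |f x0|, fun x => ?_⟩, L, hL⟩
    have := hC x x0
    rw [Real.dist_eq] at this
    have := abs_sub_abs_le_abs_sub (f x) (f x0)
    linarith
  have hm0 : μ.mass ≠ 0 := by simpa using h0
  have ev : ∀ᶠ n in atTop, (μs n).mass ≠ 0 := hmass.eventually_ne hm0
  have e : ∀ ν : FiniteMeasure S, ν.mass ≠ 0 → ∫ x, f x ∂(ν.normalize : Measure S) =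
      ((ν.mass : ℝ))⁻¹ * ∫ x, f x ∂(ν : Measure S) := by
    intro ν hν
    rw [ν.toMeasure_normalize_eq_of_nonzero (by simpa using hν), integral_smul_nnreal_measure]
    simp [NNReal.smul_def]
  rw [e μ hm0]
  refine Tendsto.congr' (ev.mono fun n hn => (e _ hn).symm) ?_
  exact ((NNReal.tendsto_coe.2 hmass).inv₀ (by simpa using h0)).mul (hbl f hf)

end EqE

/-- **Equivalence of equicontinuity notions for families of regular Markov operators.**
Given a family `(P_λ)` of regular Markov operators on a complete separable metric space, with
dual operators `U_λ`, the following are equivalent: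
(i) for every bounded Lipschitz `f`, the family `{U_λ f}` is equicontinuous;
(ii) `{P_λ}` is equicontinuous as a family of maps of `M⁺(S)` with the `‖·‖*_BL`-metric;
(iii) `{P_λ}` is equicontinuous as a family of maps from `P(S)` with the weak (narrow) topology
to `P(S)` with the `‖·‖*_BL`-metric. -/
theorem equivalence_equicontinuity {S : Type*} [MetricSpace S] [CompleteSpace S]
    [TopologicalSpace.SeparableSpace S] [MeasurableSpace S] [BorelSpace S] {Λ : Type*}
    (P : Λ → FiniteMeasure S → FiniteMeasure S)
    (U : Λ → (S → ℝ) → (S → ℝ))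
    -- each `P l` is a Markov operator:
    (hadd : ∀ l (μ ν : FiniteMeasure S), P l (μ + ν) = P l μ + P l ν)
    (hsmul : ∀ l (r : NNReal) (μ : FiniteMeasure S), P l (r • μ) = r • P l μ)
    (hmass : ∀ l (μ : FiniteMeasure S), (P l μ) Set.univ = μ Set.univ)
    -- `U l` is the dual operator of `P l`: it is linear on bounded measurable functions, maps
    -- them to bounded measurable functions, and satisfies `∫ f d(P_λ μ) = ∫ (U_λ f) dμ`:
    (hUlin : ∀ l (c : ℝ) (f g : S → ℝ), Measurable f → (∃ C : ℝ, ∀ x, |f x| ≤ C) →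
      Measurable g → (∃ C : ℝ, ∀ x, |g x| ≤ C) →
      U l (fun x => c * f x + g x) = fun x => c * U l f x + U l g x)
    (hdual : ∀ l (f : S → ℝ), Measurable f → (∃ C : ℝ, ∀ x, |f x| ≤ C) →
      Measurable (U l f) ∧ (∃ C : ℝ, ∀ x, |U l f x| ≤ C) ∧
      ∀ μ : FiniteMeasure S, ∫ x, f x ∂(P l μ : Measure S) = ∫ x, U l f x ∂(μ : Measure S)) :
    -- (i) ↔ (ii) ↔ (iii):
    ((∀ f : S → ℝ, IsBL f → Equicontinuous (fun l : Λ => U l f)) ↔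
      (∀ μ₀ : FiniteMeasure S, ∀ ε : ℝ, 0 < ε → ∃ δ : ℝ, 0 < δ ∧
        ∀ (l : Λ) (μ : FiniteMeasure S), blDist μ μ₀ < δ → blDist (P l μ) (P l μ₀) < ε)) ∧
    ((∀ μ₀ : FiniteMeasure S, ∀ ε : ℝ, 0 < ε → ∃ δ : ℝ, 0 < δ ∧
        ∀ (l : Λ) (μ : FiniteMeasure S), blDist μ μ₀ < δ → blDist (P l μ) (P l μ₀) < ε) ↔
      (∀ μ₀ : ProbabilityMeasure S, ∀ ε : ℝ, 0 < ε →
        ∃ V : Set (ProbabilityMeasure S), IsOpen V ∧ μ₀ ∈ V ∧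
          ∀ (l : Λ), ∀ μ ∈ V, blDist (P l μ.toFiniteMeasure) (P l μ₀.toFiniteMeasure) < ε)) := by
  have hUb : ∀ l (f : S → ℝ), IsBL f → ∀ C : ℝ, (∀ x, |f x| ≤ C) → ∀ x, |U l f x| ≤ C := by
    intro l f hf C hC x
    obtain ⟨K, hK⟩ := hf.2
    have hfm := hK.continuous.measurable
    obtain ⟨h1, -, h3⟩ := hdual l f hfm hf.1
    have h4 := h3 (diracProba x).toFiniteMeasure
    have h5 : ∫ y, U l f y ∂((diracProba x).toFiniteMeasure : Measure S) = U l f x :=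
      integral_dirac' _ _ h1.stronglyMeasurable
    rw [h5] at h4
    rw [← h4]
    have hm := hmass l (diracProba x).toFiniteMeasure
    have hm1 : (diracProba x).toFiniteMeasure Set.univ = 1 := (diracProba x).mass_toFiniteMeasure
    rw [hm1] at hm
    have hm2 : ((P l (diracProba x).toFiniteMeasure : FiniteMeasure S) : Measure S).real Set.univ = 1 := by
      have := congrArg NNReal.toReal hm
      simpa using this
    have := norm_integral_le_of_norm_le_const (μ := (P l (diracProba x).toFiniteMeasure : Measure S))
      (f := f) (C := C) (ae_of_all _ hC)
    rw [hm2, mul_one] at this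
    exact this
  have hUx : ∀ l (f : S → ℝ), IsBL f → ∀ x, U l f x =
      ∫ y, f y ∂(P l (diracProba x).toFiniteMeasure : Measure S) := by
    intro l f hf x
    obtain ⟨K, hK⟩ := hf.2
    obtain ⟨h1, -, h3⟩ := hdual l f hK.continuous.measurable hf.1
    rw [h3]
    exact (integral_dirac' _ _ h1.stronglyMeasurable).symm
  -- core consequence of (i)
  have core : (∀ f : S → ℝ, IsBL f → Equicontinuous (fun l : Λ => U l f)) →
      ∀ (μs : ℕ → FiniteMeasure S) (μ : FiniteMeasure S) (ls : ℕ → Λ), Tendsto μs atTop (𝓝 μ) →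
      Tendsto (fun n => blDist (P (ls n) (μs n)) (P (ls n) μ)) atTop (𝓝 0) := by
    intro hi μs μ ls hμ
    have hmt : Tendsto (fun n => ((μs n).mass : ℝ)) atTop (𝓝 μ.mass) := NNReal.tendsto_coe.2 hμ.mass
    obtain ⟨B, hB⟩ := hmt.bddAbove_range
    have hms : ∀ l (ν : FiniteMeasure S), (P l ν : Measure S).real Set.univ = (ν.mass : ℝ) := by
      intro l ν
      exact congrArg NNReal.toReal (hmass l ν)
    apply EqE.schur (M := B + μ.mass)
    · intro n
      rw [measureReal_add_apply, hms, hms]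
      have := hB ⟨n, rfl⟩
      simp only at this
      linarith
    · intro f hf
      obtain ⟨C, hC⟩ := hf.1
      obtain ⟨K, hK⟩ := hf.2
      have hfm := hK.continuous.measurable
      have := EqE.unif hμ ((hi f hf).comp ls) (C := C) (fun n x => hUb (ls n) f hf C hC x)
      refine this.congr (fun n => ?_)
      rw [(hdual (ls n) f hfm hf.1).2.2, (hdual (ls n) f hfm hf.1).2.2]
      rfl
  have i_ii : (∀ f : S → ℝ, IsBL f → Equicontinuous (fun l : Λ => U l f)) →
      (∀ μ₀ : FiniteMeasure S, ∀ ε : ℝ, 0 < ε → ∃ δ : ℝ, 0 < δ ∧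
        ∀ (l : Λ) (μ : FiniteMeasure S), blDist μ μ₀ < δ → blDist (P l μ) (P l μ₀) < ε) := by
    intro hi μ₀ ε hε
    by_contra hc
    push Not at hc
    choose ls μs h1 h2 using fun n : ℕ => hc (1 / ((n : ℝ) + 1)) (by positivity)
    have hw : Tendsto μs atTop (𝓝 μ₀) := EqE.weak_of_blDist
      (squeeze_zero (fun n => EqE.blDist_nonneg _ _) (fun n => (h1 n).le)
        tendsto_one_div_add_atTop_nhds_zero_nat)
    have := ge_of_tendsto' (core hi μs μ₀ ls hw) h2
    linarith
  have i_iii : (∀ f : S → ℝ, IsBL f → Equicontinuous (fun l : Λ => U l f)) →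
      (∀ μ₀ : ProbabilityMeasure S, ∀ ε : ℝ, 0 < ε →
        ∃ V : Set (ProbabilityMeasure S), IsOpen V ∧ μ₀ ∈ V ∧
          ∀ (l : Λ), ∀ μ ∈ V, blDist (P l μ.toFiniteMeasure) (P l μ₀.toFiniteMeasure) < ε) := by
    intro hi μ₀ ε hε
    have : SecondCountableTopology S := UniformSpace.secondCountable_of_separable S
    suffices H : ∀ᶠ μ in 𝓝 μ₀, ∀ l, blDist (P l μ.toFiniteMeasure) (P l μ₀.toFiniteMeasure) < ε by
      obtain ⟨V, h1, h2, h3⟩ := eventually_nhds_iff.1 H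
      exact ⟨V, h2, h3, fun l μ hμ => h1 μ hμ l⟩
    by_contra hc
    obtain ⟨μs, hμs, hbad⟩ := Filter.exists_seq_forall_of_frequently (Filter.not_eventually.1 hc)
    push Not at hbad
    choose ls hls using hbad
    have := ge_of_tendsto' (core hi (fun n => (μs n).toFiniteMeasure) μ₀.toFiniteMeasure ls
      ((ProbabilityMeasure.tendsto_nhds_iff_toFiniteMeasure_tendsto_nhds _).1 hμs)) hls
    linarith
  -- from Dirac masses back to (i)
  have back : (∀ x₀ : S, ∀ ε : ℝ, 0 < ε → ∀ᶠ x in 𝓝 x₀, ∀ l : Λ,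
      blDist (P l (diracProba x).toFiniteMeasure) (P l (diracProba x₀).toFiniteMeasure) < ε) →
      (∀ f : S → ℝ, IsBL f → Equicontinuous (fun l : Λ => U l f)) := by
    intro h f hf x₀
    rw [Metric.equicontinuousAt_iff_right]
    intro ε hε
    obtain ⟨s, hs, hle⟩ := EqE.le_mul_blDist hf
    filter_upwards [h x₀ (ε / s) (by positivity)] with x hx l
    rw [dist_comm, Real.dist_eq, hUx l f hf, hUx l f hf]
    refine (hle _ _).trans_lt ?_
    have := hx l
    rw [lt_div_iff₀ hs] at this
    linarith
  have iii_i : (∀ μ₀ : ProbabilityMeasure S, ∀ ε : ℝ, 0 < ε →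
        ∃ V : Set (ProbabilityMeasure S), IsOpen V ∧ μ₀ ∈ V ∧
          ∀ (l : Λ), ∀ μ ∈ V, blDist (P l μ.toFiniteMeasure) (P l μ₀.toFiniteMeasure) < ε) →
      (∀ f : S → ℝ, IsBL f → Equicontinuous (fun l : Λ => U l f)) := by
    intro h
    apply back
    intro x₀ ε hε
    obtain ⟨V, h1, h2, h3⟩ := h (diracProba x₀) ε hε
    filter_upwards [continuous_diracProba.continuousAt.preimage_mem_nhds (h1.mem_nhds h2)] with x hx l
    exact h3 l _ hx
  have ii_i : (∀ μ₀ : FiniteMeasure S, ∀ ε : ℝ, 0 < ε → ∃ δ : ℝ, 0 < δ ∧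
        ∀ (l : Λ) (μ : FiniteMeasure S), blDist μ μ₀ < δ → blDist (P l μ) (P l μ₀) < ε) →
      (∀ f : S → ℝ, IsBL f → Equicontinuous (fun l : Λ => U l f)) := by
    intro h
    apply back
    intro x₀ ε hε
    obtain ⟨δ, hδ, h1⟩ := h (diracProba x₀).toFiniteMeasure ε hε
    filter_upwards [Metric.ball_mem_nhds x₀ hδ] with x hx l
    apply h1
    refine lt_of_le_of_lt (EqE.blDist_le dist_nonneg ?_) (Metric.mem_ball.1 hx)
    intro f _ hf
    have e : ∀ y, ∫ z, f z ∂((diracProba y).toFiniteMeasure : Measure S) = f y := fun y =>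
      integral_dirac' _ _ hf.continuous.measurable.stronglyMeasurable
    rw [e, e]
    simpa [Real.dist_eq] using hf.dist_le_mul x x₀
  exact ⟨⟨i_ii, ii_i⟩, ⟨fun h => i_iii (ii_i h), fun h => i_ii (iii_i h)⟩⟩
end

section
/- Let (S,d) be a complete separable metric space and let (φ_t)_{t ≥ 0} be a semigroup of Borel measurable transformations of S (φ_0 = id, φ_t ∘ φ_s = φ_{t+s}). For each t ≥ 0 let P_t : M⁺(S) → M⁺(S) be the push-forward operator, P_t μ(E) = μ(φ_t^{-1}(E)) for Borel sets E ⊆ S. Then the family (P_t)_{t ≥ 0}, viewed as maps from M⁺(S) with the metric induced by ‖·‖*_BL to itself, is equicontinuous if and only if the family (φ_t)_{t ≥ 0} of maps S → S is equicontinuous. -/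
open MeasureTheory Filter Topology

lemma integrable_of_bl {S : Type*} [PseudoMetricSpace S] [MeasurableSpace S] [BorelSpace S]
    (μ : Measure S) [IsFiniteMeasure μ] {f : S → ℝ} {C : ℝ} (hC : ∀ x, |f x| ≤ C)
    (hf : Continuous f) : Integrable f μ :=
  Integrable.of_bound hf.measurable.aestronglyMeasurable C
    (Eventually.of_forall fun x => by simpa [Real.norm_eq_abs] using hC x)

lemma pairing_sub {S : Type*} [PseudoMetricSpace S] [MeasurableSpace S] [BorelSpace S]
    (μ ν : Measure S) [IsFiniteMeasure μ] [IsFiniteMeasure ν] {f : S → ℝ} {C : ℝ}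
    (hC : ∀ x, |f x| ≤ C) (hf : Continuous f) :
    pairing (μ.toSignedMeasure - ν.toSignedMeasure) f = ∫ x, f x ∂μ - ∫ x, f x ∂ν := by
  unfold pairing
  set s := μ.toSignedMeasure - ν.toSignedMeasure with hs
  have h1 : s.toJordanDecomposition.posPart.toSignedMeasure
      - s.toJordanDecomposition.negPart.toSignedMeasure = s :=
    s.toSignedMeasure_toJordanDecomposition
  have h2 : s.toJordanDecomposition.posPart + ν = s.toJordanDecomposition.negPart + μ := by
    rw [← Measure.toSignedMeasure_eq_toSignedMeasure_iff]
    rw [Measure.toSignedMeasure_add, Measure.toSignedMeasure_add]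
    have := h1.trans hs
    rw [sub_eq_sub_iff_add_eq_add] at this
    rw [this, add_comm]
  have h3 : ∫ x, f x ∂(s.toJordanDecomposition.posPart + ν)
      = ∫ x, f x ∂(s.toJordanDecomposition.negPart + μ) := by rw [h2]
  rw [integral_add_measure (integrable_of_bl _ hC hf) (integrable_of_bl _ hC hf),
    integral_add_measure (integrable_of_bl _ hC hf) (integrable_of_bl _ hC hf)] at h3
  linarith

lemma abs_integral_le_bl {S : Type*} [MeasurableSpace S]
    (μ : Measure S) [IsFiniteMeasure μ] {f : S → ℝ} {C : ℝ} (hC : ∀ x, |f x| ≤ C) :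
    |∫ x, f x ∂μ| ≤ C * μ.real Set.univ := by
  have := norm_integral_le_of_norm_le_const (μ := μ) (f := f) (C := C)
    (Eventually.of_forall fun x => by simpa [Real.norm_eq_abs] using hC x)
  simpa using this

lemma le_blDist {S : Type*} [PseudoMetricSpace S] [MeasurableSpace S] [BorelSpace S]
    (μ ν : FiniteMeasure S) {f : S → ℝ} {C : ℝ} {K : NNReal}
    (hC : ∀ x, |f x| ≤ C) (hf : LipschitzWith K f) (h : C + K ≤ 1) :
    |∫ x, f x ∂(μ : Measure S) - ∫ x, f x ∂(ν : Measure S)| ≤ blDist μ ν := by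
  unfold blDist blDualNorm
  refine le_csSup ?_ ⟨f, C, K, hC, hf, h, by rw [pairing_sub _ _ hC hf.continuous]⟩
  refine ⟨(μ : Measure S).real Set.univ + (ν : Measure S).real Set.univ, ?_⟩
  rintro r ⟨f, C, K, hC, hf, h, rfl⟩
  rw [pairing_sub _ _ hC hf.continuous]
  have hC1 : ∀ x, |f x| ≤ 1 := fun x => (hC x).trans (by linarith [K.coe_nonneg])
  have a := abs_integral_le_bl (μ : Measure S) hC1
  have b := abs_integral_le_bl (ν : Measure S) hC1
  have := abs_sub (∫ x, f x ∂(μ : Measure S)) (∫ x, f x ∂(ν : Measure S))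
  linarith

lemma le_mul_blDist {S : Type*} [PseudoMetricSpace S] [MeasurableSpace S] [BorelSpace S]
    (μ ν : FiniteMeasure S) {f : S → ℝ} {K : NNReal}
    (hC : ∀ x, |f x| ≤ 1) (hf : LipschitzWith K f) :
    |∫ x, f x ∂(μ : Measure S) - ∫ x, f x ∂(ν : Measure S)| ≤ (1 + K) * blDist μ ν := by
  have hM : (0 : ℝ) < 1 + K := by positivity
  have key := le_blDist μ ν (f := fun x => (1 + (K : ℝ))⁻¹ * f x) (C := (1 + (K : ℝ))⁻¹)
    (K := (1 + K)⁻¹ * K) (fun x => by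
      rw [abs_mul, abs_of_pos (inv_pos.2 hM)]
      exact mul_le_of_le_one_right (inv_pos.2 hM).le (hC x))
    (LipschitzWith.of_le_add_mul _ fun x y => by
      have := hf.le_add_mul x y
      have h2 := mul_le_mul_of_nonneg_left this (inv_pos.2 hM).le
      push_cast
      linarith)
    (by push_cast; apply le_of_eq; field_simp)
  rw [integral_const_mul, integral_const_mul, ← mul_sub, abs_mul, abs_of_pos (inv_pos.2 hM),
    inv_mul_le_iff₀ hM] at key
  exact key

lemma blDist_le {S : Type*} [PseudoMetricSpace S] [MeasurableSpace S] [BorelSpace S]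
    (μ ν : FiniteMeasure S) {B : ℝ} (hB : 0 ≤ B)
    (h : ∀ f : S → ℝ, (∀ x, |f x| ≤ 1) → LipschitzWith 1 f →
      ∫ x, f x ∂(ν : Measure S) - ∫ x, f x ∂(μ : Measure S) ≤ B) : blDist μ ν ≤ B := by
  refine Real.sSup_le ?_ hB
  rintro r ⟨f, C, K, hC, hf, hCK, rfl⟩
  rw [pairing_sub _ _ hC hf.continuous]
  rcases isEmpty_or_nonempty S with hS | ⟨⟨x0⟩⟩
  · have : ∀ μ : Measure S, μ = 0 := fun μ => Measure.eq_zero_of_isEmpty μ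
    rw [this (μ : Measure S), this (ν : Measure S)]
    simpa using hB
  have hC0 : 0 ≤ C := (abs_nonneg _).trans (hC x0)
  have hC1 : ∀ x, |f x| ≤ 1 := fun x => (hC x).trans (by linarith [K.coe_nonneg])
  have hK : K ≤ 1 := by
    rw [← NNReal.coe_le_coe]; push_cast; linarith
  have a := h f hC1 (hf.weaken hK)
  have b := h (fun x => - f x) (fun x => by simpa using hC1 x) (hf.weaken hK).neg
  rw [integral_neg, integral_neg] at b
  rw [abs_le]; constructor <;> linarith

/-- inf-convolution -/
noncomputable def infConv {S : Type*} [PseudoMetricSpace S] (g : S → ℝ) (K : NNReal) (y : S) : ℝ :=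
  ⨅ x, (g x + K * dist x y)

section
variable {S : Type*} [PseudoMetricSpace S] {g : S → ℝ} (hg : ∀ x, |g x| ≤ 1) (K : NNReal)
include hg

lemma infConv_bdd (y : S) : BddBelow (Set.range fun x => g x + K * dist x y) := by
  refine ⟨-1, ?_⟩
  rintro _ ⟨x, rfl⟩
  have := (abs_le.1 (hg x)).1
  have : 0 ≤ (K : ℝ) * dist x y := by positivity
  dsimp only
  linarith

lemma infConv_le (y : S) : infConv g K y ≤ g y := by
  have := ciInf_le (infConv_bdd hg K y) y
  simpa [infConv] using this

lemma infConv_abs (y : S) : |infConv g K y| ≤ 1 := by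
  rw [abs_le]
  refine ⟨?_, (infConv_le hg K y).trans (abs_le.1 (hg y)).2⟩
  have : Nonempty S := ⟨y⟩
  refine le_ciInf fun x => ?_
  have := (abs_le.1 (hg x)).1
  have : 0 ≤ (K : ℝ) * dist x y := by positivity
  linarith

lemma infConv_lip : LipschitzWith K (infConv g K) := by
  refine LipschitzWith.of_le_add_mul _ fun x y => ?_
  have : Nonempty S := ⟨y⟩
  rw [← sub_le_iff_le_add]
  refine le_ciInf fun z => ?_
  have h1 := ciInf_le (infConv_bdd hg K x) z
  have h2 : (K : ℝ) * dist z x ≤ K * (dist z y + dist x y) := by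
    gcongr
    exact dist_triangle_right _ _ _
  unfold infConv
  linarith

lemma le_infConv {r η : ℝ} (hη : 0 ≤ η) (hK : 2 ≤ K * r) (y : S)
    (h : ∀ x, dist x y < r → g y - η ≤ g x) : g y - η ≤ infConv g K y := by
  have : Nonempty S := ⟨y⟩
  refine le_ciInf fun x => ?_
  rcases lt_or_ge (dist x y) r with hx | hx
  · have := h x hx
    have : 0 ≤ (K : ℝ) * dist x y := by positivity
    linarith
  · have h1 := (abs_le.1 (hg x)).1
    have h2 := (abs_le.1 (hg y)).2
    have : (K : ℝ) * r ≤ K * dist x y := by gcongr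
    linarith
end

lemma equi_forward {S : Type*} [MetricSpace S] [MeasurableSpace S] [BorelSpace S]
    (φ : NNReal → S → S) (hmeas : ∀ t, Measurable (φ t))
    (H : ∀ μ₀ : FiniteMeasure S, ∀ ε : ℝ, 0 < ε → ∃ δ : ℝ, 0 < δ ∧
        ∀ (t : NNReal) (μ : FiniteMeasure S),
          blDist μ μ₀ < δ → blDist (μ.map (φ t)) (μ₀.map (φ t)) < ε) :
      Equicontinuous φ := by
  let D : S → FiniteMeasure S := fun x => ⟨Measure.dirac x, inferInstance⟩
  have hD : ∀ x, (D x : Measure S) = Measure.dirac x := fun x => rfl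
  intro x0
  rw [Metric.equicontinuousAt_iff]
  intro ε hε
  obtain ⟨δ, hδ, h⟩ := H (D x0) (2⁻¹ * min 1 ε) (by positivity)
  refine ⟨δ, hδ, fun x hx t => ?_⟩
  have h1 : blDist (D x) (D x0) ≤ dist x x0 := by
    refine blDist_le _ _ dist_nonneg fun f hf hl => ?_
    rw [hD, hD, integral_dirac' _ _ hl.continuous.measurable.stronglyMeasurable,
      integral_dirac' _ _ hl.continuous.measurable.stronglyMeasurable]
    have := hl.le_add_mul x0 x
    rw [dist_comm x x0]
    simp at this
    linarith
  have h2 := h t (D x) (h1.trans_lt hx)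
  have hl : LipschitzWith 2⁻¹ (fun y => 2⁻¹ * min 1 (dist y (φ t x0)) : S → ℝ) := by
    refine LipschitzWith.of_le_add_mul _ fun a b => ?_
    have h1 := dist_triangle a b (φ t x0)
    have h2 : min 1 (dist a (φ t x0)) ≤ min 1 (dist b (φ t x0)) + dist a b := by
      rw [← min_add_add_right]
      exact min_le_min (by linarith [dist_nonneg (x := a) (y := b)]) (by linarith)
    push_cast
    linarith
  have h3 := le_blDist ((D x).map (φ t)) ((D x0).map (φ t)) (C := 2⁻¹)
    (fun y => by
      rw [abs_of_nonneg (by positivity)]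
      have := min_le_left 1 (dist y (φ t x0))
      linarith) hl (by norm_num)
  rw [FiniteMeasure.toMeasure_map, FiniteMeasure.toMeasure_map, hD, hD,
    Measure.map_dirac' (hmeas t), Measure.map_dirac' (hmeas t),
    integral_dirac' _ _ hl.continuous.measurable.stronglyMeasurable,
    integral_dirac' _ _ hl.continuous.measurable.stronglyMeasurable] at h3
  simp only [dist_self] at h3
  have h4 := (le_abs_self _).trans_lt (h3.trans_lt h2)
  have h5 : min 1 (dist (φ t x) (φ t x0)) < min 1 ε := by
    have : min (1 : ℝ) 0 = 0 := by norm_num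
    rw [this] at h4
    linarith
  rw [dist_comm]
  rcases lt_min_iff.1 h5 with ⟨h6, h7⟩
  rcases min_lt_iff.1 h6 with h8 | h8
  · exact absurd h8 (lt_irrefl _)
  · rwa [min_eq_right h8.le] at h7

lemma equi_backward {S : Type*} [MetricSpace S] [MeasurableSpace S] [BorelSpace S]
    (φ : NNReal → S → S) (H : Equicontinuous φ) (μ₀ : FiniteMeasure S) (ε : ℝ) (hε : 0 < ε) :
    ∃ δ : ℝ, 0 < δ ∧ ∀ (t : NNReal) (μ : FiniteMeasure S),
          blDist μ μ₀ < δ → blDist (μ.map (φ t)) (μ₀.map (φ t)) < ε := by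
  have hcont : ∀ t, Continuous (φ t) := fun t => H.continuous t
  set m : ℝ := (μ₀ : Measure S).real Set.univ with hm
  have hm0 : 0 ≤ m := measureReal_nonneg
  set η : ℝ := ε / (4 * (m + 1)) with hη
  have hη0 : 0 < η := by positivity
  have hηm : η * m ≤ ε / 4 := by
    rw [hη, div_mul_eq_mul_div, div_le_div_iff₀ (by positivity) (by positivity)]
    nlinarith
  let A : ℕ → Set S := fun n => {x | ∀ t y, dist y x < 1 / ((n : ℝ) + 1) →
    dist (φ t y) (φ t x) ≤ η}
  have hAcl : ∀ n, IsClosed (A n) := by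
    intro n
    refine isClosed_of_closure_subset fun x hx t y hy => ?_
    rw [mem_closure_iff_clusterPt, ClusterPt] at hx
    have e1 : ∀ᶠ z in 𝓝 x, dist y z < 1 / ((n : ℝ) + 1) :=
      (continuous_const.dist continuous_id).continuousAt.eventually_lt
        (continuousAt_const) hy
    have e2 : Tendsto (fun z => dist (φ t y) (φ t z)) (𝓝 x ⊓ 𝓟 (A n))
        (𝓝 (dist (φ t y) (φ t x))) :=
      ((continuous_const.dist (hcont t)).tendsto x).mono_left inf_le_left
    refine le_of_tendsto e2 ?_
    filter_upwards [e1.filter_mono inf_le_left,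
      (eventually_principal.2 fun z hz => hz : ∀ᶠ z in 𝓟 (A n), z ∈ A n).filter_mono
        inf_le_right] with z hz1 hz2
    exact hz2 t y hz1
  have hAmono : Monotone A := by
    intro a b hab x hx t y hy
    refine hx t y (hy.trans_le ?_)
    exact Nat.one_div_le_one_div hab
  have hAun : ⋂ n, (A n)ᶜ = ∅ := by
    rw [← Set.compl_iUnion, Set.compl_empty_iff, Set.eq_univ_iff_forall]
    intro x
    obtain ⟨δ, hδ, h⟩ := Metric.equicontinuousAt_iff.1 (H x) η hη0
    obtain ⟨n, hn⟩ := exists_nat_one_div_lt hδ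
    refine Set.mem_iUnion.2 ⟨n, fun t y hy => ?_⟩
    rw [dist_comm]
    exact (h y (hy.trans hn) t).le
  have htend : Tendsto (fun n => (μ₀ : Measure S) ((A n)ᶜ)) atTop (𝓝 0) := by
    have := tendsto_measure_iInter_atTop (μ := (μ₀ : Measure S)) (s := fun n => (A n)ᶜ)
      (fun n => (hAcl n).measurableSet.compl.nullMeasurableSet)
      (fun a b hab => Set.compl_subset_compl.2 (hAmono hab)) ⟨0, measure_ne_top _ _⟩
    rwa [hAun, measure_empty] at this
  have htend' : Tendsto (fun n => (μ₀ : Measure S).real ((A n)ᶜ)) atTop (𝓝 0) := by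
    have := (ENNReal.tendsto_toReal ENNReal.zero_ne_top).comp htend
    rw [ENNReal.toReal_zero] at this
    exact this
  obtain ⟨n, hn⟩ := (htend'.eventually_lt_const (show 0 < ε / 8 by positivity)).exists
  let K : NNReal := 2 * (n + 1)
  have hK : (2 : ℝ) ≤ K * (1 / ((n : ℝ) + 1)) := by
    apply le_of_eq
    simp only [K]; push_cast; field_simp
  have hK1 : (0 : ℝ) < 1 + K := by positivity
  refine ⟨ε / 8 / (1 + K), by positivity, fun t μ hμ => ?_⟩
  refine lt_of_le_of_lt (b := 7 * ε / 8) ?_ (by linarith)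
  refine blDist_le _ _ (by positivity) fun f hf hl => ?_
  have hmt : ∀ ν : FiniteMeasure S, ∫ x, f x ∂((ν.map (φ t) : FiniteMeasure S) : Measure S)
      = ∫ x, f (φ t x) ∂(ν : Measure S) := fun ν => by
    rw [FiniteMeasure.toMeasure_map, integral_map (hcont t).measurable.aemeasurable
      hl.continuous.measurable.aestronglyMeasurable]
  rw [hmt, hmt]
  set g : S → ℝ := fun x => f (φ t x) with hg
  have hg1 : ∀ x, |g x| ≤ 1 := fun x => hf _
  have hgc : Continuous g := hl.continuous.comp (hcont t)
  have hic := (infConv_lip hg1 K).continuous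
  have ia := infConv_abs hg1 K
  have s1 := le_mul_blDist μ μ₀ ia (infConv_lip hg1 K)
  have s2 : (1 + (K : ℝ)) * blDist μ μ₀ ≤ ε / 8 := by
    have := (lt_div_iff₀ hK1).1 hμ
    linarith
  have s3 : ∫ x, infConv g K x ∂(μ : Measure S) ≤ ∫ x, g x ∂(μ : Measure S) :=
    integral_mono (integrable_of_bl _ ia hic) (integrable_of_bl _ hg1 hgc)
      (fun x => infConv_le hg1 K x)
  have hint : Integrable ((A n)ᶜ.indicator fun _ => (2 : ℝ)) (μ₀ : Measure S) :=
    (integrable_const _).indicator (hAcl n).measurableSet.compl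
  have s4 : ∫ x, g x ∂(μ₀ : Measure S) ≤
      ∫ x, (infConv g K x + (η + (A n)ᶜ.indicator (fun _ => (2 : ℝ)) x)) ∂(μ₀ : Measure S) := by
    refine integral_mono (integrable_of_bl _ hg1 hgc)
      ((integrable_of_bl _ ia hic).add ((integrable_const _).add hint)) fun y => ?_
    by_cases hy : y ∈ A n
    · have := le_infConv hg1 K hη0.le hK y (fun x hx => by
        have h1 := hy t x hx
        have h2 := hl.le_add_mul (φ t y) (φ t x)
        rw [dist_comm] at h2
        simp at h2
        simp only [hg]
        linarith)
      simp [hy]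
      linarith
    · have h1 := (abs_le.1 (ia y)).1
      have h2 := (abs_le.1 (hg1 y)).2
      simp [hy]
      linarith
  have hint2 : Integrable (fun x => η + (A n)ᶜ.indicator (fun _ => (2 : ℝ)) x) (μ₀ : Measure S) :=
    (integrable_const _).add hint
  rw [integral_add (integrable_of_bl _ ia hic) hint2,
    integral_add (integrable_const _) hint, integral_const,
    integral_indicator_const _ (hAcl n).measurableSet.compl, smul_eq_mul, smul_eq_mul, ← hm] at s4
  have s5 := (abs_le.1 s1).1
  linarith

/-- **Equicontinuity of the lifted semigroup.** Let `(φ_t)_{t ≥ 0}` be a semigroup of Borel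
measurable transformations of a complete separable metric space `S`, and let `P_t` be the
push-forward operator on finite positive Borel measures, `P_t μ = μ ∘ φ_t⁻¹`. Then `(P_t)` is
equicontinuous for the metric induced by `‖·‖*_BL` on `M⁺(S)` if and only if `(φ_t)` is
equicontinuous as a family of maps `S → S`. -/
theorem pushforward_semigroup_equicontinuous_iff {S : Type*} [MetricSpace S] [CompleteSpace S]
    [TopologicalSpace.SeparableSpace S] [MeasurableSpace S] [BorelSpace S]
    (φ : NNReal → S → S) (hmeas : ∀ t, Measurable (φ t))
    (h0 : φ 0 = id) (hsg : ∀ t s : NNReal, φ t ∘ φ s = φ (t + s)) :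
    ((∀ μ₀ : FiniteMeasure S, ∀ ε : ℝ, 0 < ε → ∃ δ : ℝ, 0 < δ ∧
        ∀ (t : NNReal) (μ : FiniteMeasure S),
          blDist μ μ₀ < δ → blDist (μ.map (φ t)) (μ₀.map (φ t)) < ε) ↔
      Equicontinuous φ) := by
  exact ⟨equi_forward φ hmeas, fun H μ₀ ε hε => equi_backward φ H μ₀ ε hε⟩
end

section
/- Let (S,d) be a complete separable metric space and let M ⊆ M(S) be a set of finite signed Borel measures with sup_{μ ∈ M} ‖μ‖_TV < ∞. If the restriction to M of the σ(M(S), BL(S))-weak topology is first countable, then this restricted topology coincides with the restriction to M of the topology induced by the norm ‖·‖*_BL. -/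
open MeasureTheory Filter Topology

/-- Total variation norm of a finite signed measure. -/
noncomputable def tvNorm {S : Type*} [MeasurableSpace S] (μ : SignedMeasure S) : ℝ :=
  (μ.totalVariation Set.univ).toReal

/-- The `σ(M(S), BL(S))`-weak topology on `M(S)`: the coarsest topology making
`μ ↦ ⟨μ, f⟩` continuous for every bounded Lipschitz `f`. -/
noncomputable def weakTop (S : Type*) [PseudoMetricSpace S] [MeasurableSpace S] :
    TopologicalSpace (SignedMeasure S) :=
  ⨅ f : {g : S → ℝ // IsBL g},
    TopologicalSpace.induced (fun μ : SignedMeasure S => pairing μ f.1) inferInstance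

/-- The topology on `M(S)` induced by the norm `‖·‖*_BL`, generated by the open balls. -/
noncomputable def normTop (S : Type*) [PseudoMetricSpace S] [MeasurableSpace S] :
    TopologicalSpace (SignedMeasure S) :=
  TopologicalSpace.generateFrom
    {B | ∃ (μ : SignedMeasure S) (ε : ℝ), 0 < ε ∧ B = {ν | blDualNorm (ν - μ) < ε}}

set_option linter.unusedSectionVars false

section helpers

variable {S : Type*} [MetricSpace S] [MeasurableSpace S] [BorelSpace S]

def LipSet (S : Type*) [MetricSpace S] (L : ℝ) : Set (S → ℝ) :=
  {f | (∀ x, |f x| ≤ 1) ∧ ∀ x y, |f x - f y| ≤ L * dist x y}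

lemma LipSet.lip {L : ℝ} (hL : 0 ≤ L) {f : S → ℝ} (hf : f ∈ LipSet S L) :
    LipschitzWith L.toNNReal f :=
  LipschitzWith.of_dist_le_mul fun x y => by
    rw [Real.coe_toNNReal _ hL, Real.dist_eq]; exact hf.2 x y

lemma LipSet.cont {L : ℝ} (hL : 0 ≤ L) {f : S → ℝ} (hf : f ∈ LipSet S L) :
    Continuous f := (LipSet.lip hL hf).continuous

lemma LipSet.isBL {L : ℝ} (hL : 0 ≤ L) {f : S → ℝ} (hf : f ∈ LipSet S L) : IsBL f :=
  ⟨⟨1, hf.1⟩, _, LipSet.lip hL hf⟩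

lemma LipSet.isCompact (L : ℝ) : IsCompact (LipSet S L) := by
  have h1 : IsCompact (Set.pi Set.univ (fun _ : S => Set.Icc (-1 : ℝ) 1)) :=
    isCompact_univ_pi fun _ => isCompact_Icc
  refine h1.of_isClosed_subset ?_ ?_
  · have : LipSet S L = (⋂ x : S, {f : S → ℝ | |f x| ≤ 1}) ∩
        ⋂ x : S, ⋂ y : S, {f : S → ℝ | |f x - f y| ≤ L * dist x y} := by
      ext f; simp [LipSet]
    rw [this]
    refine IsClosed.inter (isClosed_iInter fun x => ?_)
      (isClosed_iInter fun x => isClosed_iInter fun y => ?_)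
    · exact isClosed_le (by fun_prop) (by fun_prop)
    · exact isClosed_le (by fun_prop) (by fun_prop)
  · intro f hf x _
    exact abs_le.1 (hf.1 x)

lemma LipSet.firstCountable [TopologicalSpace.SeparableSpace S] {L : ℝ} (hL : 0 ≤ L) :
    FirstCountableTopology (LipSet S L) := by
  obtain ⟨D, hDc, hD⟩ := TopologicalSpace.exists_countable_dense S
  have : Countable D := hDc.to_subtype
  have : CompactSpace (LipSet S L) := isCompact_iff_compactSpace.1 (LipSet.isCompact L)
  let r : LipSet S L → (D → ℝ) := fun f d => f.1 d
  have hr : Continuous r := by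
    refine continuous_pi fun d => ?_
    exact (continuous_apply (d : S)).comp continuous_subtype_val
  have hi : Function.Injective r := by
    intro f g hfg
    apply Subtype.ext
    refine Continuous.ext_on hD (LipSet.cont hL f.2) (LipSet.cont hL g.2) ?_
    intro x hx
    exact congrFun hfg ⟨x, hx⟩
  exact (hr.isClosedEmbedding hi).isInducing.firstCountableTopology

lemma bdd_integrable (P : Measure S) [IsFiniteMeasure P] {f : S → ℝ} (hf : Continuous f)
    {c : ℝ} (hc : ∀ x, |f x| ≤ c) : Integrable f P :=
  Integrable.of_bound hf.measurable.aestronglyMeasurable c (Eventually.of_forall hc)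

lemma pairing_eq (μ : SignedMeasure S) (P N : Measure S) [IsFiniteMeasure P] [IsFiniteMeasure N]
    (h : μ = P.toSignedMeasure - N.toSignedMeasure) {f : S → ℝ} (hf : Continuous f)
    {c : ℝ} (hc : ∀ x, |f x| ≤ c) : pairing μ f = ∫ x, f x ∂P - ∫ x, f x ∂N := by
  have hJ := μ.toSignedMeasure_toJordanDecomposition
  set J := μ.toJordanDecomposition with hJd
  have h2 : J.posPart.toSignedMeasure - J.negPart.toSignedMeasure
      = P.toSignedMeasure - N.toSignedMeasure := by
    rw [← h]; exact hJ
  have h3 : (J.posPart + N).toSignedMeasure = (P + J.negPart).toSignedMeasure := by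
    rw [Measure.toSignedMeasure_add, Measure.toSignedMeasure_add]
    rw [sub_eq_sub_iff_add_eq_add] at h2
    exact h2
  have h4 : J.posPart + N = P + J.negPart :=
    Measure.toSignedMeasure_eq_toSignedMeasure_iff.1 h3
  have h5 : ∫ x, f x ∂(J.posPart + N) = ∫ x, f x ∂(P + J.negPart) := by rw [h4]
  rw [integral_add_measure (bdd_integrable _ hf hc) (bdd_integrable _ hf hc),
    integral_add_measure (bdd_integrable _ hf hc) (bdd_integrable _ hf hc)] at h5
  unfold pairing
  rw [← hJd]
  linarith

lemma pairing_sub_left (μ ν : SignedMeasure S) {f : S → ℝ} (hf : Continuous f)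
    {c : ℝ} (hc : ∀ x, |f x| ≤ c) : pairing (μ - ν) f = pairing μ f - pairing ν f := by
  have h1 := μ.toSignedMeasure_toJordanDecomposition
  have h2 := ν.toSignedMeasure_toJordanDecomposition
  rw [pairing_eq (μ - ν) (μ.toJordanDecomposition.posPart + ν.toJordanDecomposition.negPart)
    (μ.toJordanDecomposition.negPart + ν.toJordanDecomposition.posPart) ?_ hf hc]
  · rw [integral_add_measure (bdd_integrable _ hf hc) (bdd_integrable _ hf hc),
      integral_add_measure (bdd_integrable _ hf hc) (bdd_integrable _ hf hc)]
    unfold pairing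
    ring
  · rw [Measure.toSignedMeasure_add, Measure.toSignedMeasure_add]
    conv_lhs => rw [← h1, ← h2]
    unfold JordanDecomposition.toSignedMeasure
    abel

lemma pairing_sub_right (μ : SignedMeasure S) {f g : S → ℝ} (hf : Continuous f)
    {c : ℝ} (hc : ∀ x, |f x| ≤ c) (hg : Continuous g) {c' : ℝ} (hc' : ∀ x, |g x| ≤ c') :
    pairing μ (fun x => f x - g x) = pairing μ f - pairing μ g := by
  unfold pairing
  rw [integral_sub (bdd_integrable _ hf hc) (bdd_integrable _ hg hc'),
    integral_sub (bdd_integrable _ hf hc) (bdd_integrable _ hg hc')]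
  ring

lemma pairing_smul (μ : SignedMeasure S) (f : S → ℝ) (a : ℝ) :
    pairing μ (fun x => a * f x) = a * pairing μ f := by
  unfold pairing
  rw [integral_const_mul, integral_const_mul]
  ring

lemma tvNorm_nonneg' (μ : SignedMeasure S) : 0 ≤ tvNorm μ := ENNReal.toReal_nonneg

lemma pairing_bound (μ : SignedMeasure S) {f : S → ℝ} {c : ℝ} (hc : ∀ x, |f x| ≤ c) :
    |pairing μ f| ≤ c * tvNorm μ := by
  have h1 := norm_integral_le_of_norm_le_const (μ := μ.toJordanDecomposition.posPart)
    (f := f) (C := c) (Eventually.of_forall hc)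
  have h2 := norm_integral_le_of_norm_le_const (μ := μ.toJordanDecomposition.negPart)
    (f := f) (C := c) (Eventually.of_forall hc)
  have h3 : tvNorm μ = μ.toJordanDecomposition.posPart.real Set.univ
      + μ.toJordanDecomposition.negPart.real Set.univ := by
    unfold tvNorm SignedMeasure.totalVariation
    rw [Measure.add_apply, ENNReal.toReal_add (measure_ne_top _ _) (measure_ne_top _ _)]
    rfl
  rw [h3, mul_add]
  rw [Real.norm_eq_abs] at h1 h2
  unfold pairing
  exact (abs_sub _ _).trans (add_le_add h1 h2)

lemma pairing_continuous [TopologicalSpace.SeparableSpace S] (μ : SignedMeasure S) {L : ℝ}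
    (hL : 0 ≤ L) : Continuous (fun f : LipSet S L => pairing μ f.1) := by
  have := LipSet.firstCountable (S := S) hL
  have key : ∀ P : Measure S, IsFiniteMeasure P →
      Continuous (fun f : LipSet S L => ∫ x, f.1 x ∂P) := by
    intro P _
    refine continuous_of_dominated (bound := fun _ => (1 : ℝ)) ?_ ?_ ?_ ?_
    · intro f
      exact (LipSet.cont hL f.2).measurable.aestronglyMeasurable
    · intro f
      exact Eventually.of_forall f.2.1
    · exact integrable_const _
    · exact Eventually.of_forall fun x =>
        (continuous_apply x).comp continuous_subtype_val
  exact (key _ inferInstance).sub (key _ inferInstance)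

lemma clamp_exists {L δ : ℝ} (hL : 0 ≤ L) (hLδ : 2 ≤ L * δ) (f0 : S → ℝ)
    (hf0 : f0 ∈ LipSet S L) (F : Finset S) :
    ∃ Φ : (S → ℝ) → (S → ℝ),
      (∀ h ∈ LipSet S L, Φ h ∈ LipSet S L) ∧
      (∀ h, ∀ y ∈ F, Φ h y = f0 y) ∧
      (∀ h h' x, |Φ h x - Φ h' x| ≤ |h x - h' x|) ∧
      (∀ h ∈ LipSet S L, ∀ x, (∀ y ∈ F, δ ≤ dist x y) → Φ h x = h x) := by
  classical
  induction F using Finset.induction_on with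
  | empty => exact ⟨id, by simp, by simp, by simp, by simp⟩
  | insert a F _ ih =>
    obtain ⟨Φ, h1, h2, h3, h4⟩ := ih
    have hclip : ∀ l u s t : ℝ, |max l (min u s) - max l (min u t)| ≤ |s - t| := by
      intro l u s t
      refine (abs_max_sub_max_le_max _ _ _ _).trans ?_
      rw [sub_self, abs_zero, max_eq_right (abs_nonneg _)]
      refine (abs_min_sub_min_le_max _ _ _ _).trans ?_
      rw [sub_self, abs_zero, max_eq_right (abs_nonneg _)]
    have ha := abs_le.1 (hf0.1 a)
    refine ⟨fun h x => max (f0 a - L * dist x a) (min (f0 a + L * dist x a) (Φ h x)),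
      ?_, ?_, ?_, ?_⟩
    · intro h hh
      have hh' := h1 h hh
      refine ⟨fun x => ?_, fun x y => ?_⟩
      · have hx := abs_le.1 (hh'.1 x)
        have hd : 0 ≤ L * dist x a := by positivity
        rw [abs_le]
        constructor
        · exact le_max_of_le_right (le_min (by linarith) hx.1)
        · exact max_le (by linarith) ((min_le_right _ _).trans hx.2)
      · have hd : |L * dist x a - L * dist y a| ≤ L * dist x y := by
          rw [← mul_sub, abs_mul, abs_of_nonneg hL]
          exact mul_le_mul_of_nonneg_left (abs_dist_sub_le x y a) hL
        refine (abs_max_sub_max_le_max _ _ _ _).trans (max_le ?_ ?_)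
        · rw [show f0 a - L * dist x a - (f0 a - L * dist y a)
            = -(L * dist x a - L * dist y a) by ring, abs_neg]
          exact hd
        · refine (abs_min_sub_min_le_max _ _ _ _).trans (max_le ?_ (hh'.2 x y))
          rw [show f0 a + L * dist x a - (f0 a + L * dist y a)
            = (L * dist x a - L * dist y a) by ring]
          exact hd
    · intro h y hy
      rcases Finset.mem_insert.1 hy with rfl | hy
      · simp
      · have := abs_le.1 (hf0.2 y a)
        simp only [h2 h y hy]
        rw [min_eq_right (by linarith), max_eq_right (by linarith)]
    · intro h h' x
      exact (hclip _ _ _ _).trans (h3 h h' x)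
    · intro h hh x hx
      have e := h4 h hh x fun y hy => hx y (Finset.mem_insert_of_mem hy)
      have hxa := hx a (Finset.mem_insert_self _ _)
      have hb := abs_le.1 (hh.1 x)
      have : L * δ ≤ L * dist x a := mul_le_mul_of_nonneg_left hxa hL
      simp only [e]
      rw [min_eq_right (by linarith), max_eq_right (by linarith)]

lemma schur_like [TopologicalSpace.SeparableSpace S] (μ : ℕ → SignedMeasure S)
    (ν : SignedMeasure S) (C : ℝ) (hC : ∀ n, tvNorm (μ n) ≤ C) (hν : tvNorm ν ≤ C)
    (hw : ∀ f, IsBL f → Tendsto (fun n => pairing (μ n) f) atTop (𝓝 (pairing ν f)))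
    (ε : ℝ) (hε : 0 < ε) :
    ∃ N, ∀ n ≥ N, ∀ h ∈ LipSet S 1, |pairing (μ n) h - pairing ν h| ≤ ε := by
  have hC0 : 0 ≤ C := (tvNorm_nonneg' ν).trans hν
  set e := ε / 6 with he
  have he0 : 0 < e := by positivity
  set δ := ε / (24 * C + 24) with hδ
  have hδ0 : 0 < δ := by positivity
  have hCδ : 12 * C * δ ≤ ε / 2 := by
    rw [hδ, mul_div_assoc', div_le_div_iff₀ (by positivity) (by positivity)]
    nlinarith
  set L := 2 / δ + 1 with hLdef
  have hL : 0 ≤ L := by positivity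
  have hL1 : 1 ≤ L := by
    have : 0 ≤ 2 / δ := by positivity
    linarith
  have hLδ : 2 ≤ L * δ := by
    rw [hLdef, add_mul, div_mul_cancel₀ _ hδ0.ne']; linarith
  have hsub : ∀ h ∈ LipSet S 1, h ∈ LipSet S L := fun h hh =>
    ⟨hh.1, fun x y => (hh.2 x y).trans (mul_le_mul_of_nonneg_right hL1 dist_nonneg)⟩
  have hwT : ∀ f, IsBL f → ∀ᶠ n in atTop, |pairing (μ n) f - pairing ν f| ≤ e := by
    intro f hf
    have := (Metric.tendsto_nhds.1 (hw f hf)) e he0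
    filter_upwards [this] with n hn
    rw [Real.dist_eq] at hn
    exact hn.le
  -- Baire category
  have : CompactSpace (LipSet S L) := isCompact_iff_compactSpace.1 (LipSet.isCompact L)
  have : Nonempty (LipSet S L) :=
    ⟨⟨fun _ => 0, by simp, fun x y => by simp; positivity⟩⟩
  let A : ℕ → Set (LipSet S L) := fun N =>
    {f | ∀ n ≥ N, |pairing (μ n) f.1 - pairing ν f.1| ≤ e}
  have hAc : ∀ N, IsClosed (A N) := by
    intro N
    have : A N = ⋂ n, ⋂ (_ : n ≥ N), {f | |pairing (μ n) f.1 - pairing ν f.1| ≤ e} := by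
      ext f; simp [A]
    rw [this]
    refine isClosed_iInter fun n => isClosed_iInter fun _ => ?_
    exact isClosed_le ((pairing_continuous (μ n) hL).sub (pairing_continuous ν hL)).abs
      continuous_const
  have hAU : ⋃ N, A N = Set.univ := by
    rw [Set.eq_univ_iff_forall]
    intro f
    obtain ⟨N, hN⟩ := eventually_atTop.1 (hwT f.1 (LipSet.isBL hL f.2))
    exact Set.mem_iUnion.2 ⟨N, hN⟩
  obtain ⟨N, f0, hf0⟩ := nonempty_interior_of_iUnion_of_closed hAc hAU
  obtain ⟨V, hV, hVA⟩ := isOpen_induced_iff.1 (isOpen_interior (s := A N))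
  have hf0V : f0.1 ∈ V := by
    have : f0 ∈ Subtype.val ⁻¹' V := by rw [hVA]; exact hf0
    exact this
  obtain ⟨F, u, hu, huV⟩ := isOpen_pi_iff.1 hV f0.1 hf0V
  have hF : ∀ f ∈ LipSet S L, (∀ y ∈ F, f y = f0.1 y) →
      ∀ n ≥ N, |pairing (μ n) f - pairing ν f| ≤ e := by
    intro f hf hff
    have h1 : f ∈ V := huV fun y hy => by rw [hff y hy]; exact (hu y hy).2
    have h2 : (⟨f, hf⟩ : LipSet S L) ∈ interior (A N) := by rw [← hVA]; exact h1
    exact interior_subset h2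
  obtain ⟨Φ, hΦ1, hΦ2, hΦ3, hΦ4⟩ := clamp_exists hL hLδ f0.1 f0.2 F
  -- finite net
  obtain ⟨P, hP1, hP2⟩ := (LipSet.isCompact (S := S) 1).elim_nhds_subcover
    (fun p => {f | ∀ y ∈ F, |f y - p y| < δ}) (by
      intro p _
      have : IsOpen (⋂ y ∈ F, {f : S → ℝ | |f y - p y| < δ}) :=
        isOpen_biInter_finset fun y _ => isOpen_lt (by fun_prop) (by fun_prop)
      refine mem_of_superset (this.mem_nhds (by simp [hδ0])) ?_
      intro f hf
      simpa using hf)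
  have hPe : ∀ᶠ n in atTop, ∀ p ∈ P, |pairing (μ n) p - pairing ν p| ≤ e :=
    (Filter.eventually_all_finset P).2 fun p hp => hwT p (LipSet.isBL zero_le_one (hP1 p hp))
  obtain ⟨N2, hN2⟩ := eventually_atTop.1 hPe
  refine ⟨max N N2, fun n hn h hh => ?_⟩
  obtain ⟨p, hpP, hp⟩ := Set.mem_iUnion₂.1 (hP2 hh)
  have hp' : ∀ y ∈ F, |h y - p y| < δ := hp
  have hpX := hP1 p hpP
  have hhL := hsub h hh
  have hpL := hsub p hpX
  have e1 := hN2 n ((le_max_right _ _).trans hn) p hpP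
  have e2 := hF (Φ h) (hΦ1 h hhL) (hΦ2 h) n ((le_max_left _ _).trans hn)
  have e3 := hF (Φ p) (hΦ1 p hpL) (hΦ2 p) n ((le_max_left _ _).trans hn)
  have hbd : ∀ x, |(h x - p x) - (Φ h x - Φ p x)| ≤ 6 * δ := by
    intro x
    by_cases hx : ∀ y ∈ F, δ ≤ dist x y
    · rw [hΦ4 h hhL x hx, hΦ4 p hpL x hx, sub_self, abs_zero]; positivity
    · push Not at hx
      obtain ⟨y, hy, hxy⟩ := hx
      have a1 := abs_le.1 (hh.2 x y)
      have a2 := abs_le.1 (hpX.2 x y)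
      have a3 := abs_lt.1 (hp' y hy)
      have a4 : |h x - p x| ≤ 3 * δ := by
        rw [abs_le]; constructor <;> linarith
      have a5 := (hΦ3 h p x).trans a4
      rw [abs_le] at a4 a5 ⊢
      constructor <;> linarith
  have c1 := LipSet.cont hL hhL
  have c2 := LipSet.cont hL hpL
  have c3 := LipSet.cont hL (hΦ1 h hhL)
  have c4 := LipSet.cont hL (hΦ1 p hpL)
  have b12 : ∀ x, |h x - p x| ≤ 1 + 1 := fun x =>
    (abs_sub _ _).trans (add_le_add (hh.1 x) (hpX.1 x))
  have b34 : ∀ x, |Φ h x - Φ p x| ≤ 1 + 1 := fun x =>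
    (abs_sub _ _).trans (add_le_add ((hΦ1 h hhL).1 x) ((hΦ1 p hpL).1 x))
  have lin : ∀ κ : SignedMeasure S, pairing κ (fun x => (h x - p x) - (Φ h x - Φ p x))
      = (pairing κ h - pairing κ p) - (pairing κ (Φ h) - pairing κ (Φ p)) := by
    intro κ
    rw [pairing_sub_right κ (f := fun x => h x - p x) (g := fun x => Φ h x - Φ p x)
      (c1.sub c2) b12 (c3.sub c4) b34,
      pairing_sub_right κ c1 hh.1 c2 hpX.1,
      pairing_sub_right κ c3 (hΦ1 h hhL).1 c4 (hΦ1 p hpL).1]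
  have q1 := pairing_bound (μ n) hbd
  have q2 := pairing_bound ν hbd
  rw [lin] at q1 q2
  have q3 : 6 * δ * tvNorm (μ n) ≤ 6 * δ * C :=
    mul_le_mul_of_nonneg_left (hC n) (by positivity)
  have q4 : 6 * δ * tvNorm ν ≤ 6 * δ * C :=
    mul_le_mul_of_nonneg_left hν (by positivity)
  have q1' := abs_le.1 (q1.trans q3)
  have q2' := abs_le.1 (q2.trans q4)
  rw [abs_le] at e1 e2 e3 ⊢
  constructor <;> linarith

lemma blSet_bdd (μ : SignedMeasure S) :
    BddAbove {r : ℝ | ∃ (f : S → ℝ) (C : ℝ) (K : NNReal), (∀ x, |f x| ≤ C) ∧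
    LipschitzWith K f ∧ C + (K : ℝ) ≤ 1 ∧ r = |pairing μ f|} := by
  refine ⟨1 * tvNorm μ, ?_⟩
  rintro r ⟨f, C, K, h1, h2, h3, rfl⟩
  exact pairing_bound μ fun x => (h1 x).trans (by have := K.2; simp at this; linarith [K.coe_nonneg])

lemma le_blDualNorm (μ : SignedMeasure S) {f : S → ℝ} {C : ℝ} {K : NNReal}
    (h1 : ∀ x, |f x| ≤ C) (h2 : LipschitzWith K f) (h3 : C + (K : ℝ) ≤ 1) :
    |pairing μ f| ≤ blDualNorm μ :=
  le_csSup (blSet_bdd μ) ⟨f, C, K, h1, h2, h3, rfl⟩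

lemma blDualNorm_le (μ : SignedMeasure S) (r : ℝ)
    (h : ∀ (f : S → ℝ) (C : ℝ) (K : NNReal), (∀ x, |f x| ≤ C) →
      LipschitzWith K f → C + (K : ℝ) ≤ 1 → |pairing μ f| ≤ r) : blDualNorm μ ≤ r := by
  refine csSup_le ⟨_, fun _ => 0, 0, 0, by simp, LipschitzWith.const 0, by simp, rfl⟩ ?_
  rintro _ ⟨f, C, K, h1, h2, h3, rfl⟩
  exact h f C K h1 h2 h3

lemma blDualNorm_tri (a b c : SignedMeasure S) :
    blDualNorm (a - c) ≤ blDualNorm (a - b) + blDualNorm (b - c) := by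
  refine blDualNorm_le _ _ fun f C K h1 h2 h3 => ?_
  have e1 := le_blDualNorm (a - b) h1 h2 h3
  have e2 := le_blDualNorm (b - c) h1 h2 h3
  rw [pairing_sub_left _ _ h2.continuous h1] at e1 e2 ⊢
  exact (abs_sub_le _ _ _).trans (add_le_add e1 e2)

lemma blDualNorm_comm (a b : SignedMeasure S) : blDualNorm (a - b) = blDualNorm (b - a) := by
  have key : ∀ a b : SignedMeasure S, blDualNorm (a - b) ≤ blDualNorm (b - a) := by
    intro a b
    refine blDualNorm_le _ _ fun f C K h1 h2 h3 => ?_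
    have e1 := le_blDualNorm (b - a) h1 h2 h3
    rw [pairing_sub_left _ _ h2.continuous h1] at e1 ⊢
    rwa [abs_sub_comm]
  exact le_antisymm (key a b) (key b a)

lemma blDualNorm_self (a : SignedMeasure S) : blDualNorm (a - a) ≤ 0 := by
  refine blDualNorm_le _ _ fun f C K h1 h2 h3 => ?_
  rw [pairing_sub_left _ _ h2.continuous h1]; simp

lemma normTop_le_weakTop : normTop S ≤ weakTop S := by
  refine le_iInf fun f => ?_
  obtain ⟨f, ⟨C, hC⟩, K, hK⟩ := f
  rw [← continuous_iff_le_induced]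
  letI := normTop S
  rw [continuous_iff_continuousAt]
  intro μ
  rw [ContinuousAt, Metric.tendsto_nhds]
  intro ε hε
  set R : ℝ := |C| + K + 1 with hR
  have hR0 : 0 < R := by positivity
  have hball : {ν : SignedMeasure S | blDualNorm (ν - μ) < ε / R} ∈ 𝓝 μ := by
    refine IsOpen.mem_nhds (TopologicalSpace.isOpen_generateFrom_of_mem
      ⟨μ, ε / R, by positivity, rfl⟩) ?_
    exact (blDualNorm_self μ).trans_lt (by positivity)
  filter_upwards [hball] with ν hν
  have hν' : blDualNorm (ν - μ) < ε / R := hν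
  have b1 : ∀ x, |R⁻¹ * f x| ≤ R⁻¹ * |C| := fun x => by
    rw [abs_mul, abs_of_pos (inv_pos.2 hR0)]
    exact mul_le_mul_of_nonneg_left ((hC x).trans (le_abs_self C)) (inv_pos.2 hR0).le
  have b2 : LipschitzWith (R⁻¹.toNNReal * K) (fun x => R⁻¹ * f x) :=
    LipschitzWith.of_dist_le_mul fun x y => by
      have := hK.dist_le_mul x y
      rw [Real.dist_eq] at this ⊢
      rw [← mul_sub, abs_mul, abs_of_pos (inv_pos.2 hR0), NNReal.coe_mul,
        Real.coe_toNNReal _ (inv_pos.2 hR0).le, mul_assoc]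
      exact mul_le_mul_of_nonneg_left this (inv_pos.2 hR0).le
  have b3 : R⁻¹ * |C| + ((R⁻¹.toNNReal * K : NNReal) : ℝ) ≤ 1 := by
    rw [NNReal.coe_mul, Real.coe_toNNReal _ (inv_pos.2 hR0).le, ← mul_add,
      inv_mul_le_one₀ hR0]
    linarith
  have := (le_blDualNorm (ν - μ) b1 b2 b3).trans_lt hν'
  rw [pairing_smul, pairing_sub_left _ _ hK.continuous hC, abs_mul,
    abs_of_pos (inv_pos.2 hR0), inv_mul_eq_div, div_lt_div_iff_of_pos_right hR0] at this
  rw [Real.dist_eq]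
  exact this

end helpers

/-- If `M ⊆ M(S)` is bounded in total variation norm and the restricted
`σ(M(S), BL(S))`-weak topology on `M` is first countable, then on `M` the weak topology
coincides with the `‖·‖*_BL`-norm topology. -/
theorem coincidence_of_topologies {S : Type*} [MetricSpace S] [CompleteSpace S]
    [TopologicalSpace.SeparableSpace S] [MeasurableSpace S] [BorelSpace S]
    (M : Set (SignedMeasure S)) (hTV : ∃ C : ℝ, ∀ μ ∈ M, tvNorm μ ≤ C)
    (hfc : @FirstCountableTopology M
      (TopologicalSpace.induced ((↑) : M → SignedMeasure S) (weakTop S))) :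
    TopologicalSpace.induced ((↑) : M → SignedMeasure S) (weakTop S) =
      TopologicalSpace.induced ((↑) : M → SignedMeasure S) (normTop S) := by
  obtain ⟨C, hC⟩ := hTV
  refine le_antisymm ?_ (induced_mono normTop_le_weakTop)
  letI τ : TopologicalSpace M :=
    TopologicalSpace.induced ((↑) : M → SignedMeasure S) (weakTop S)
  have : FirstCountableTopology M := hfc
  rw [← continuous_iff_le_induced]
  refine continuous_generateFrom_iff.2 ?_
  rintro _ ⟨μ, ε, hε, rfl⟩
  have hcont : Continuous (fun ν : M => blDualNorm (ν.1 - μ)) := by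
    rw [continuous_iff_seqContinuous]
    intro s ν hs
    have hw : ∀ f, IsBL f →
        Tendsto (fun n => pairing (s n).1 f) atTop (𝓝 (pairing ν.1 f)) := by
      intro f hf
      have hc : Continuous (fun κ : M => pairing κ.1 f) := by
        rw [continuous_iff_le_induced]
        have h1 : weakTop S ≤ TopologicalSpace.induced
            (fun μ : SignedMeasure S => pairing μ f) inferInstance :=
          iInf_le (fun f : {g : S → ℝ // IsBL g} => TopologicalSpace.induced
            (fun μ : SignedMeasure S => pairing μ f.1) inferInstance) ⟨f, hf⟩
        have h2 := induced_mono (g := ((↑) : M → SignedMeasure S)) h1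
        rw [induced_compose] at h2
        exact h2
      exact (hc.tendsto ν).comp hs
    rw [Metric.tendsto_atTop]
    intro η hη
    obtain ⟨N, hN⟩ := schur_like (fun n => (s n).1) ν.1 C (fun n => hC _ (s n).2)
      (hC _ ν.2) hw (η / 2) (by positivity)
    refine ⟨N, fun n hn => ?_⟩
    have h1 : blDualNorm ((s n).1 - ν.1) ≤ η / 2 := by
      refine blDualNorm_le _ _ fun f c K h1 h2 h3 => ?_
      rw [pairing_sub_left _ _ h2.continuous h1]
      refine hN n hn f ⟨fun x => (h1 x).trans (by linarith [K.coe_nonneg]), fun x y => ?_⟩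
      have hc0 : 0 ≤ c := (abs_nonneg _).trans (h1 x)
      have := h2.dist_le_mul x y
      rw [Real.dist_eq] at this
      exact this.trans (mul_le_mul_of_nonneg_right (by linarith) dist_nonneg)
    have t1 := blDualNorm_tri (s n).1 ν.1 μ
    have t2 := blDualNorm_tri ν.1 (s n).1 μ
    rw [blDualNorm_comm ν.1 (s n).1] at t2
    rw [Real.dist_eq, abs_lt]
    constructor <;> simp only [Function.comp] <;> linarith
  exact isOpen_Iio.preimage hcont
end

section
/- Let S be a Polish space (a separable completely metrizable topological space) and let (μ_n) be a sequence of finite signed Borel measures on S such that for every bounded continuous function f : S → ℝ the sequence ∫_S f dμ_n converges in ℝ. Then there exists a finite signed Borel measure μ_* on S such that ∫_S f dμ_n → ∫_S f dμ_* for every bounded continuous f : S → ℝ. -/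
open MeasureTheory Filter Topology

open scoped NNReal ENNReal

lemma aux_int {S : Type*} [TopologicalSpace S] [MeasurableSpace S] [BorelSpace S]
    (p : Measure S) [IsFiniteMeasure p] {f : S → ℝ} (hf : Continuous f) {C : ℝ}
    (hC : ∀ x, |f x| ≤ C) : Integrable f p :=
  Integrable.of_bound hf.measurable.aestronglyMeasurable C (ae_of_all _ hC)

lemma aux_sign {S : Type*} [TopologicalSpace S] [PolishSpace S]
    [MeasurableSpace S] [BorelSpace S] (p q : Measure S) [IsFiniteMeasure p] [IsFiniteMeasure q]
    (hpq : p ⟂ₘ q) {ε : ℝ} (hε : 0 < ε) :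
    ∃ g : S → ℝ, Continuous g ∧ (∀ x, |g x| ≤ 1) ∧
      ∀ h : S → ℝ, Continuous h → (∀ x, 0 ≤ h x) → (∀ x, h x ≤ 1) →
        ∫ x, h x ∂p + ∫ x, h x ∂q - ε ≤ ∫ x, h x * g x ∂p - ∫ x, h x * g x ∂q := by
  letI := TopologicalSpace.upgradeIsCompletelyMetrizable S
  obtain ⟨A, hA, hpA, hqA⟩ := hpq
  classical
  set s : S → ℝ := fun x => if x ∈ A then -1 else 1 with hs
  have hsm : Measurable s := Measurable.ite hA measurable_const measurable_const
  have hs1 : ∀ x, |s x| ≤ 1 := by intro x; simp only [hs]; split_ifs <;> simp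
  have hsi : Integrable s (p + q) :=
    Integrable.of_bound hsm.aestronglyMeasurable 1 (ae_of_all _ hs1)
  obtain ⟨g, hg, hgi⟩ := hsi.exists_boundedContinuous_integral_sub_le hε
  have hcl : ∀ x, |max (-1) (min 1 (g x))| ≤ 1 := by
    intro x; rw [abs_le]; constructor <;> simp
  have hgc : Continuous fun x => max (-1) (min 1 (g x)) := by fun_prop
  refine ⟨fun x => max (-1) (min 1 (g x)), hgc, hcl, ?_⟩
  intro h hh h0 h1
  set k : S → ℝ := fun x => max (-1) (min 1 (g x)) with hk
  have hkg : ∀ x, |s x - k x| ≤ |s x - g x| := by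
    intro x
    have h2 := abs_le.1 (hs1 x)
    simp only [hk]
    rcases le_total 1 (g x) with h3 | h3
    · rw [min_eq_left h3, max_eq_right (by norm_num), abs_le]
      constructor
      · have := neg_abs_le (s x - g x); linarith
      · have := abs_nonneg (s x - g x); linarith
    · rw [min_eq_right h3]
      rcases le_total (-1) (g x) with h4 | h4
      · rw [max_eq_right h4]
      · rw [max_eq_left h4, abs_le]
        constructor
        · have := abs_nonneg (s x - g x); linarith
        · have := le_abs_self (s x - g x); linarith
  have habs : ∀ x, |h x| ≤ 1 := fun x => abs_le.2 ⟨by linarith [h0 x], h1 x⟩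
  have hhk : ∀ x, |h x * k x| ≤ 1 := fun x => by
    rw [abs_mul]; exact mul_le_one₀ (habs x) (abs_nonneg _) (hcl x)
  have hhkc : Continuous fun x => h x * k x := hh.mul hgc
  have hsgi : ∀ (r : Measure S) [IsFiniteMeasure r], Integrable (fun x => |s x - g x|) r := by
    intro r _
    exact ((Integrable.of_bound hsm.aestronglyMeasurable 1 (ae_of_all _ hs1)).sub
      (g.integrable r)).abs
  have e1 : ∫ x, (h x - h x * k x) ∂p ≤ ∫ x, |s x - g x| ∂p := by
    apply integral_mono_ae ((aux_int p hh habs).sub (aux_int p hhkc hhk)) (hsgi p)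
    have : ∀ᵐ x ∂p, x ∉ A := by simpa [ae_iff] using hpA
    filter_upwards [this] with x hx
    have h5 : s x = 1 := by simp [hs, hx]
    have h6 := hkg x
    have h7 := le_abs_self (s x - k x)
    rw [h5] at h6 h7 ⊢
    have h8 := (abs_le.1 (hcl x)).2
    have : h x * (1 - k x) ≤ 1 * (1 - k x) := mul_le_mul_of_nonneg_right (h1 x) (by simpa [hk] using h8)
    show h x - h x * k x ≤ |1 - g x|
    linarith
  have e2 : ∫ x, (h x + h x * k x) ∂q ≤ ∫ x, |s x - g x| ∂q := by
    apply integral_mono_ae ((aux_int q hh habs).add (aux_int q hhkc hhk)) (hsgi q)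
    have : ∀ᵐ x ∂q, x ∈ A := by rw [ae_iff]; exact hqA
    filter_upwards [this] with x hx
    have h5 : s x = -1 := by simp [hs, hx]
    have h6 := hkg x
    have h7 := neg_abs_le (s x - k x)
    rw [h5] at h6 h7 ⊢
    have h8 : -1 ≤ k x := (abs_le.1 (hcl x)).1
    have : h x * (1 + k x) ≤ 1 * (1 + k x) := mul_le_mul_of_nonneg_right (h1 x) (by linarith)
    show h x + h x * k x ≤ |-1 - g x|
    linarith
  rw [integral_sub (aux_int p hh habs) (aux_int p hhkc hhk)] at e1
  rw [integral_add (aux_int q hh habs) (aux_int q hhkc hhk)] at e2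
  simp only [Real.norm_eq_abs] at hg
  rw [integral_add_measure (hsgi p) (hsgi q)] at hg
  linarith

lemma aux_bdd {S : Type*} [TopologicalSpace S] [PolishSpace S]
    [MeasurableSpace S] [BorelSpace S] (p q : ℕ → Measure S)
    [∀ n, IsFiniteMeasure (p n)] [∀ n, IsFiniteMeasure (q n)]
    (hpq : ∀ n, p n ⟂ₘ q n)
    (hconv : ∀ f : S → ℝ, Continuous f → (∃ C : ℝ, ∀ x, |f x| ≤ C) →
      ∃ l : ℝ, Tendsto (fun n => ∫ x, f x ∂(p n) - ∫ x, f x ∂(q n)) atTop (𝓝 l)) :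
    ∃ C : ℝ, ∀ n, (p n).real Set.univ + (q n).real Set.univ ≤ C := by
  open BoundedContinuousFunction in
  let L0 : ℕ → (S →ᵇ ℝ) →ₗ[ℝ] ℝ := fun n =>
    { toFun := fun f => ∫ x, f x ∂(p n) - ∫ x, f x ∂(q n)
      map_add' := by
        intro f g
        simp only [BoundedContinuousFunction.coe_add, Pi.add_apply]
        rw [integral_add (f.integrable _) (g.integrable _),
          integral_add (f.integrable _) (g.integrable _)]
        ring
      map_smul' := by
        intro c f
        simp only [BoundedContinuousFunction.coe_smul, smul_eq_mul, RingHom.id_apply]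
        rw [integral_const_mul, integral_const_mul]
        ring }
  let L : ℕ → (S →ᵇ ℝ) →L[ℝ] ℝ := fun n =>
    (L0 n).mkContinuous ((p n).real Set.univ + (q n).real Set.univ) (by
      intro f
      have h1 := f.norm_integral_le_mul_norm (p n)
      have h2 := f.norm_integral_le_mul_norm (q n)
      show ‖∫ x, f x ∂(p n) - ∫ x, f x ∂(q n)‖ ≤ _
      refine (norm_sub_le _ _).trans ?_
      linarith)
  obtain ⟨C, hC⟩ := banach_steinhaus (g := L) (by
    intro f
    obtain ⟨l, hl⟩ := hconv f f.continuous ⟨‖f‖, fun x => f.norm_coe_le_norm x⟩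
    obtain ⟨B, hB⟩ := hl.norm.bddAbove_range
    exact ⟨B, fun i => hB ⟨i, rfl⟩⟩)
  refine ⟨C + 1, fun n => ?_⟩
  obtain ⟨g, hg, hg1, hgh⟩ := aux_sign (p n) (q n) (hpq n) one_pos
  have h := hgh (fun _ => 1) continuous_const (by simp) (by simp)
  simp only [one_mul, integral_const, smul_eq_mul, mul_one] at h
  let g' : S →ᵇ ℝ := BoundedContinuousFunction.ofNormedAddCommGroup g hg 1 hg1
  have h3 : L n g' = ∫ x, g x ∂(p n) - ∫ x, g x ∂(q n) := rfl
  have h4 : ‖g'‖ ≤ 1 := BoundedContinuousFunction.norm_ofNormedAddCommGroup_le hg zero_le_one hg1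
  have h5 : L n g' ≤ C := by
    refine (le_abs_self _).trans (((L n).le_opNorm g').trans ?_)
    have := hC n
    have h0 := norm_nonneg (L n)
    nlinarith [norm_nonneg g']
  linarith

lemma aux_final {S : Type*} [MeasurableSpace S] [TopologicalSpace S] [BorelSpace S]
    (p q : Measure S) [IsFiniteMeasure p] [IsFiniteMeasure q]
    (f : S → ℝ) (hf : Continuous f) (hb : ∃ C : ℝ, ∀ x, |f x| ≤ C) :
    pairing (p.toSignedMeasure - q.toSignedMeasure) f = ∫ x, f x ∂p - ∫ x, f x ∂q := by
  obtain ⟨C, hC⟩ := hb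
  set ν := p.toSignedMeasure - q.toSignedMeasure with hν
  have h := ν.toSignedMeasure_toJordanDecomposition
  unfold pairing
  set a := ν.toJordanDecomposition.posPart with ha
  set b := ν.toJordanDecomposition.negPart with hb
  have h2 : a.toSignedMeasure - b.toSignedMeasure = p.toSignedMeasure - q.toSignedMeasure := h
  have h3 : (a + q).toSignedMeasure = (p + b).toSignedMeasure := by
    rw [Measure.toSignedMeasure_add, Measure.toSignedMeasure_add]
    rw [sub_eq_sub_iff_add_eq_add] at h2
    exact h2
  have h4 : a + q = p + b := Measure.toSignedMeasure_eq_toSignedMeasure_iff.1 h3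
  have h5 : ∫ x, f x ∂(a + q) = ∫ x, f x ∂(p + b) := by rw [h4]
  rw [integral_add_measure (aux_int _ hf hC) (aux_int _ hf hC),
    integral_add_measure (aux_int _ hf hC) (aux_int _ hf hC)] at h5
  linarith

/-- weighted sums along a partition of unity -/
noncomputable def auxP {S : Type*} [TopologicalSpace S]
    (ρ : PartitionOfUnity ℕ S Set.univ) (a : ℕ → S → ℝ) (x : S) : ℝ :=
  ∑ i ∈ ρ.finsupport x, ρ i x * a i x

lemma auxP_continuous {S : Type*} [TopologicalSpace S]
    (ρ : PartitionOfUnity ℕ S Set.univ) (a : ℕ → S → ℝ) (ha : ∀ i, Continuous (a i)) :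
    Continuous (auxP ρ a) := by
  have h := ρ.continuous_finsum_smul (g := a) (fun i x _ => (ha i).continuousAt)
  convert h using 2 with x
  exact ρ.sum_finsupport_smul_eq_finsum a

lemma auxP_bdd {S : Type*} [TopologicalSpace S]
    (ρ : PartitionOfUnity ℕ S Set.univ) (a : ℕ → S → ℝ) (ha : ∀ i x, |a i x| ≤ 1) (x : S) :
    |auxP ρ a x| ≤ 1 := by
  rw [← ρ.sum_finsupport (x₀ := x) (Set.mem_univ x)]
  refine (Finset.abs_sum_le_sum_abs _ _).trans (Finset.sum_le_sum fun i _ => ?_)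
  rw [abs_mul, abs_of_nonneg (ρ.nonneg i x)]
  exact mul_le_of_le_one_right (ρ.nonneg i x) (ha i x)

lemma aux_cover {S : Type*} [TopologicalSpace S] [PolishSpace S]
    [MeasurableSpace S] [BorelSpace S] (p q : ℕ → Measure S)
    [∀ n, IsFiniteMeasure (p n)] [∀ n, IsFiniteMeasure (q n)]
    (hpq : ∀ n, p n ⟂ₘ q n)
    (hconv : ∀ f : S → ℝ, Continuous f → (∃ C : ℝ, ∀ x, |f x| ≤ C) →
      ∃ l : ℝ, Tendsto (fun n => ∫ x, f x ∂(p n) - ∫ x, f x ∂(q n)) atTop (𝓝 l))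
    (U : ℕ → Set S) (hU : ∀ i, IsOpen (U i)) (hcov : ⋃ i, U i = Set.univ) {ε : ℝ} (hε : 0 < ε) :
    ∃ J : ℕ, ∀ n, (p n + q n).real (⋃ i ≤ J, U i)ᶜ ≤ ε := by
  letI := TopologicalSpace.upgradeIsCompletelyMetrizable S
  obtain ⟨ρ, hρ⟩ := PartitionOfUnity.exists_isSubordinate isClosed_univ U hU hcov.ge
  obtain ⟨δ, hδ, hδε⟩ : ∃ δ : ℝ, 0 < δ ∧ 4 * δ ≤ ε := ⟨ε / 4, by positivity, by linarith⟩
  choose g hgc hg1 hgh using fun n => aux_sign (p n) (q n) (hpq n) hδ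
  let G : ℕ → S → ℝ := fun k => Nat.casesOn k (fun _ => 0) g
  have hGc : ∀ k, Continuous (G k) := by
    rintro (_ | k)
    · exact continuous_const
    · exact hgc k
  have hG1 : ∀ k x, |G k x| ≤ 1 := by
    rintro (_ | k) x
    · simp [G]
    · exact hg1 k x
  let f : (ℕ → ℕ) → S → ℝ := fun c => auxP ρ (fun i => G (c i))
  have hfc : ∀ c, Continuous (f c) := fun c => auxP_continuous ρ _ (fun i => hGc _)
  have hf1 : ∀ c x, |f c x| ≤ 1 := fun c => auxP_bdd ρ _ (fun i => hG1 _)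
  let F : ℕ → (ℕ → ℕ) → ℝ := fun n c => ∫ x, f c x ∂(p n) - ∫ x, f c x ∂(q n)
  have hFc : ∀ n, Continuous (F n) := by
    have key : ∀ (r : Measure S) [IsFiniteMeasure r], Continuous fun c => ∫ x, f c x ∂r := by
      intro r _
      refine continuous_of_dominated (bound := fun _ => 1)
        (fun c => (hfc c).measurable.aestronglyMeasurable)
        (fun c => ae_of_all _ (hf1 c)) (integrable_const _) (ae_of_all _ fun x => ?_)
      refine continuous_finsetSum _ fun i _ => continuous_const.mul ?_
      exact (continuous_of_discreteTopology (f := fun k => G k x)).comp (continuous_apply i)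
    intro n
    exact (key (p n)).sub (key (q n))
  -- Baire
  let E : ℕ → Set (ℕ → ℕ) := fun N => {c | ∀ m, N ≤ m → |F m c - F N c| ≤ δ}
  have hEc : ∀ N, IsClosed (E N) := by
    intro N
    simp only [E, Set.setOf_forall]
    exact isClosed_iInter fun m => isClosed_iInter fun _ =>
      isClosed_le ((hFc m).sub (hFc N)).abs continuous_const
  have hEU : ⋃ N, E N = Set.univ := by
    refine Set.eq_univ_of_forall fun c => ?_
    obtain ⟨l, hl⟩ := hconv (f c) (hfc c) ⟨1, hf1 c⟩
    obtain ⟨N, hN⟩ := Metric.cauchySeq_iff'.1 hl.cauchySeq δ hδ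
    exact Set.mem_iUnion.2 ⟨N, fun m hm => (hN m hm).le⟩
  obtain ⟨N, c0, hc0⟩ := nonempty_interior_of_iUnion_of_closed hEc hEU
  obtain ⟨J0, hJ0⟩ : ∃ J0 : ℕ, ∀ c : ℕ → ℕ, (∀ i < J0, c i = c0 i) → c ∈ E N := by
    obtain ⟨v, ⟨x, n, rfl⟩, hv1, hv2⟩ :=
      (PiNat.isTopologicalBasis_cylinders (fun _ : ℕ => ℕ)).mem_nhds_iff.1
        (mem_interior_iff_mem_nhds.1 hc0)
    refine ⟨n, fun c hc => hv2 ?_⟩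
    intro i hi
    rw [hc i hi]; exact hv1 i hi
  -- tails
  let Φ : ℕ → S → ℝ := fun J => auxP ρ (fun i _ => if i < J then 0 else 1)
  have hΦc : ∀ J, Continuous (Φ J) := fun J => auxP_continuous ρ _ (fun i => continuous_const)
  have hΦ1 : ∀ J x, |Φ J x| ≤ 1 := fun J => auxP_bdd ρ _ (fun i x => by split_ifs <;> simp)
  have hΦ0 : ∀ J x, 0 ≤ Φ J x := fun J x => Finset.sum_nonneg fun i _ =>
    mul_nonneg (ρ.nonneg i x) (by dsimp only; split_ifs <;> simp)
  have hΦi : ∀ J (r : Measure S) [IsFiniteMeasure r], Integrable (Φ J) r := fun J r _ =>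
    aux_int r (hΦc J) (hΦ1 J)
  have hΦlim : ∀ (r : Measure S) [IsFiniteMeasure r],
      Tendsto (fun J => ∫ x, Φ J x ∂r) atTop (𝓝 0) := by
    intro r _
    have : Tendsto (fun J => ∫ x, Φ J x ∂r) atTop (𝓝 (∫ _, (0 : ℝ) ∂r)) := by
      refine tendsto_integral_of_dominated_convergence (fun _ => 1)
        (fun J => (hΦc J).measurable.aestronglyMeasurable) (integrable_const _)
        (fun J => ae_of_all _ (hΦ1 J)) (ae_of_all _ fun x => ?_)
      apply tendsto_const_nhds.congr'
      filter_upwards [eventually_gt_atTop ((ρ.finsupport x).sup id)] with J hJ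
      refine (Finset.sum_eq_zero fun i hi => ?_).symm
      have : i ≤ (ρ.finsupport x).sup id := Finset.le_sup (f := id) hi
      dsimp only
      rw [if_pos (by omega), mul_zero]
    simpa using this
  obtain ⟨J, hJJ, hJN⟩ : ∃ J, J0 ≤ J ∧ ∀ n ≤ N, ∫ x, Φ J x ∂(p n + q n) ≤ δ := by
    have h1 : ∀ᶠ J in atTop, ∀ n ∈ Finset.Iic N, ∫ x, Φ J x ∂(p n + q n) ≤ δ := by
      rw [Filter.eventually_all_finset]
      intro n _
      filter_upwards [(hΦlim (p n + q n)).eventually_lt_const hδ] with J hJ using hJ.le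
    obtain ⟨J, h2, h3⟩ := ((eventually_ge_atTop J0).and h1).exists
    exact ⟨J, h2, fun n hn => h3 n (Finset.mem_Iic.2 hn)⟩
  let cc : ℕ → ℕ → ℕ := fun k i => if i < J then c0 i else k
  have hcc : ∀ k, cc k ∈ E N := fun k => hJ0 _ fun i hi => by
    simp only [cc]; rw [if_pos (by omega)]
  have hdiff : ∀ k x, f (cc k) x - f (cc 0) x = Φ J x * G k x := by
    intro k x
    simp only [f, Φ, auxP]
    rw [← Finset.sum_sub_distrib, Finset.sum_mul]
    refine Finset.sum_congr rfl fun i _ => ?_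
    by_cases hi : i < J
    · simp [cc, hi]
    · simp [cc, hi, G]
  have hFdiff : ∀ n k, F n (cc k) - F n (cc 0)
      = ∫ x, Φ J x * G k x ∂(p n) - ∫ x, Φ J x * G k x ∂(q n) := by
    intro n k
    simp only [F, ← hdiff]
    rw [integral_sub (aux_int _ (hfc _) (hf1 _)) (aux_int _ (hfc _) (hf1 _)),
      integral_sub (aux_int _ (hfc _) (hf1 _)) (aux_int _ (hfc _) (hf1 _))]
    ring
  have hle : ∀ k (r : Measure S) [IsFiniteMeasure r],
      |∫ x, Φ J x * G k x ∂r| ≤ ∫ x, Φ J x ∂r := by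
    intro k r _
    rw [← Real.norm_eq_abs]
    refine norm_integral_le_of_norm_le (hΦi J r) (ae_of_all _ fun x => ?_)
    rw [Real.norm_eq_abs, abs_mul, abs_of_nonneg (hΦ0 J x)]
    exact mul_le_of_le_one_right (hΦ0 J x) (hG1 k x)
  have hmain : ∀ m, ∫ x, Φ J x ∂(p m + q m) ≤ 4 * δ := by
    intro m
    rcases le_total m N with hm | hm
    · linarith [hJN m hm]
    · have h1 := hgh m (Φ J) (hΦc J) (hΦ0 J) (fun x => (abs_le.1 (hΦ1 J x)).2)
      have h2 := hFdiff m (m + 1)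
      have h3 := hFdiff N (m + 1)
      have h4 := abs_le.1 (hcc (m + 1) m hm)
      have h5 := abs_le.1 (hcc 0 m hm)
      have h6 := abs_le.1 (hle (m + 1) (p N))
      have h7 := abs_le.1 (hle (m + 1) (q N))
      have h8 := hJN N le_rfl
      rw [integral_add_measure (hΦi J _) (hΦi J _)] at h8 ⊢
      have h9 : G (m + 1) = g m := rfl
      rw [h9] at h2 h3 h6 h7
      linarith [h4.2, h5.1, h6.2, h7.1]
  refine ⟨J, fun n => ?_⟩
  have h1 := mul_meas_ge_le_integral_of_nonneg (ae_of_all (p n + q n) (hΦ0 J)) (hΦi J _) 1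
  rw [one_mul] at h1
  refine (measureReal_mono ?_).trans (h1.trans ((hmain n).trans hδε))
  intro x hx
  have : Φ J x = 1 := by
    rw [← ρ.sum_finsupport (x₀ := x) (Set.mem_univ x)]
    refine Finset.sum_congr rfl fun i hi => ?_
    dsimp only
    rw [if_neg, mul_one]
    intro hiJ
    apply hx
    have h2 : x ∈ Function.support (ρ i) := by simpa using hi
    exact Set.mem_iUnion₂.2 ⟨i, hiJ.le, hρ i (subset_tsupport _ h2)⟩
  exact this.ge

lemma aux_tight {S : Type*} [TopologicalSpace S] [PolishSpace S]
    [MeasurableSpace S] [BorelSpace S] (r : ℕ → Measure S) [∀ n, IsFiniteMeasure (r n)]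
    (hr : ∀ (U : ℕ → Set S), (∀ i, IsOpen (U i)) → ⋃ i, U i = Set.univ → ∀ ε : ℝ, 0 < ε →
      ∃ J : ℕ, ∀ n, (r n).real (⋃ i ≤ J, U i)ᶜ ≤ ε) (ε : ℝ≥0) (hε : 0 < ε) :
    ∃ K : Set S, IsCompact K ∧ ∀ n, r n Kᶜ ≤ ε := by
  letI := TopologicalSpace.upgradeIsCompletelyMetrizable S
  rcases isEmpty_or_nonempty S with hempty | hnonempty
  · exact ⟨∅, isCompact_empty, fun n => by simp [Set.univ_eq_empty_iff.2 hempty]⟩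
  obtain ⟨D, hD⟩ := TopologicalSpace.exists_dense_seq S
  obtain ⟨u, -, hu_pos, hu⟩ := exists_seq_strictAnti_tendsto (0 : ℝ)
  have hcov (m : ℕ) : ⋃ i, Metric.ball (D i) (u m) = Set.univ := by
    refine Set.eq_univ_of_forall fun x => Set.mem_iUnion.2 ?_
    exact Metric.denseRange_iff.1 hD x (u m) (hu_pos m)
  obtain ⟨e, he, hes⟩ := ENNReal.exists_pos_sum_of_countable (ι := ℕ)
    (ENNReal.coe_pos.2 hε).ne'
  choose k hk using fun m => hr _ (fun _ => Metric.isOpen_ball) (hcov m) (e m) (he m)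
  refine ⟨⋂ m, ⋃ i ≤ k m, Metric.closedBall (D i) (u m), ?_, fun n => ?_⟩
  · refine TotallyBounded.isCompact_of_isClosed ?_ ?_
    · refine Metric.totallyBounded_iff.mpr fun δ δpos ↦ ?_
      obtain ⟨m, hm⟩ := (hu.eventually_lt_const δpos).exists
      refine ⟨D '' Set.Iic (k m), (Set.finite_Iic _).image _, fun x hx => ?_⟩
      obtain ⟨i, hi, hxi⟩ := Set.mem_iUnion₂.1 (Set.mem_iInter.1 hx m)
      exact Set.mem_iUnion₂.2 ⟨D i, ⟨i, hi, rfl⟩, Metric.closedBall_subset_ball hm hxi⟩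
    · exact isClosed_iInter fun m =>
        (Set.finite_Iic (k m)).isClosed_biUnion fun _ _ => Metric.isClosed_closedBall
  · rw [Set.compl_iInter]
    refine (measure_iUnion_le _).trans (le_trans (ENNReal.tsum_le_tsum fun m => ?_) hes.le)
    have h1 : (r n) (⋃ i ≤ k m, Metric.ball (D i) (u m))ᶜ ≤ e m := by
      have := hk m n
      rw [Measure.real] at this
      rw [← ENNReal.ofReal_coe_nnreal]
      exact (ENNReal.le_ofReal_iff_toReal_le (measure_ne_top _ _) (e m).coe_nonneg).2 this
    refine le_trans (measure_mono ?_) h1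
    exact Set.compl_subset_compl.2 (Set.iUnion₂_mono fun i _ => Metric.ball_subset_closedBall)

lemma aux_limit {S : Type*} [TopologicalSpace S] [PolishSpace S]
    [MeasurableSpace S] [BorelSpace S] (p : ℕ → Measure S) [hp : ∀ n, IsFiniteMeasure (p n)]
    (C : ℝ) (hC : ∀ n, (p n).real Set.univ ≤ C)
    (hK : ∀ ε : ℝ≥0, 0 < ε → ∃ K : Set S, IsCompact K ∧ ∀ n, p n Kᶜ ≤ ε) (F : Ultrafilter ℕ) :
    ∃ a : FiniteMeasure S, ∀ f : S → ℝ, Continuous f → (∃ C : ℝ, ∀ x, |f x| ≤ C) →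
      Tendsto (fun n => ∫ x, f x ∂(p n)) F (𝓝 (∫ x, f x ∂(a : Measure S))) := by
  letI := TopologicalSpace.upgradeIsCompletelyMetrizable S
  obtain ⟨u, -, hu_pos, hu⟩ := exists_seq_strictAnti_tendsto (0 : ℝ≥0)
  choose K hKc hKp using fun m => hK (u m) (hu_pos m)
  have hcomp := isCompact_setOfPred_finiteMeasure_mass_le_compl_isCompact_le (E := S)
    C.toNNReal hu hKc (Or.inl inferInstance)
  let P : ℕ → FiniteMeasure S := fun n => ⟨p n, hp n⟩
  obtain ⟨a, -, ha⟩ := hcomp.ultrafilter_le_nhds (F.map P) (by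
    rw [le_principal_iff]
    refine Filter.mem_map.2 (Filter.mem_of_superset Filter.univ_mem fun n _ => ⟨?_, fun m => ?_⟩)
    · apply NNReal.le_toNNReal_of_coe_le
      exact hC n
    · exact ENNReal.toNNReal_mono ENNReal.coe_ne_top (hKp m n))
  refine ⟨a, fun f hf ⟨B, hB⟩ => ?_⟩
  have ht : Tendsto P F (𝓝 a) := ha
  exact FiniteMeasure.tendsto_iff_forall_integral_tendsto.1 ht
    (BoundedContinuousFunction.ofNormedAddCommGroup f hf B hB)

theorem Cb_weakly_sequentially_complete {S : Type*} [TopologicalSpace S] [PolishSpace S]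
    [MeasurableSpace S] [BorelSpace S]
    (μ : ℕ → SignedMeasure S)
    (hconv : ∀ f : S → ℝ, Continuous f → (∃ C : ℝ, ∀ x, |f x| ≤ C) →
      ∃ l : ℝ, Tendsto (fun n => pairing (μ n) f) atTop (𝓝 l)) :
    ∃ ν : SignedMeasure S, ∀ f : S → ℝ, Continuous f → (∃ C : ℝ, ∀ x, |f x| ≤ C) →
      Tendsto (fun n => pairing (μ n) f) atTop (𝓝 (pairing ν f)) := by
  let p : ℕ → Measure S := fun n => (μ n).toJordanDecomposition.posPart
  let q : ℕ → Measure S := fun n => (μ n).toJordanDecomposition.negPart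
  haveI : ∀ n, IsFiniteMeasure (p n) := fun n => (μ n).toJordanDecomposition.posPart_finite
  haveI : ∀ n, IsFiniteMeasure (q n) := fun n => (μ n).toJordanDecomposition.negPart_finite
  have hpq : ∀ n, p n ⟂ₘ q n := fun n => (μ n).toJordanDecomposition.mutuallySingular
  obtain ⟨C, hC⟩ := aux_bdd p q hpq hconv
  have hK := aux_tight (fun n => p n + q n)
    (fun U hU hcov ε hε => aux_cover p q hpq hconv U hU hcov hε)
  let F : Ultrafilter ℕ := Ultrafilter.of atTop
  have hF : (F : Filter ℕ) ≤ atTop := Ultrafilter.of_le atTop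
  obtain ⟨a, ha⟩ := aux_limit p C
    (fun n => by have := hC n; have h0 : 0 ≤ (q n).real Set.univ := measureReal_nonneg; linarith)
    (fun ε hε => by
      obtain ⟨K, h1, h2⟩ := hK ε hε
      exact ⟨K, h1, fun n => (Measure.le_add_right le_rfl _).trans (h2 n)⟩) F
  obtain ⟨b, hb⟩ := aux_limit q C
    (fun n => by have := hC n; have h0 : 0 ≤ (p n).real Set.univ := measureReal_nonneg; linarith)
    (fun ε hε => by
      obtain ⟨K, h1, h2⟩ := hK ε hε
      exact ⟨K, h1, fun n => (Measure.le_add_left le_rfl _).trans (h2 n)⟩) F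
  refine ⟨(a : Measure S).toSignedMeasure - (b : Measure S).toSignedMeasure, fun f hf hfb => ?_⟩
  rw [aux_final _ _ f hf hfb]
  obtain ⟨l, hl⟩ := hconv f hf hfb
  have h1 : Tendsto (fun n => pairing (μ n) f) F
      (𝓝 (∫ x, f x ∂(a : Measure S) - ∫ x, f x ∂(b : Measure S))) :=
    (ha f hf hfb).sub (hb f hf hfb)
  rwa [← tendsto_nhds_unique (hl.mono_left hF) h1]
end
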